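/- arXiv:2409.04866 — 3 statements merged into one kernel-verified Lean document; each statement's English description precedes it below -/
import Mathlib

section
/- Let 0<p≤1 and let X be a Banach space. Then H̊_p^{δ,m}(I,X) = H_p^{δ,m}(I,X) if and only if X has the Radon–Nikodým property. -/
/-!
Statement 5: Let `0 < p ≤ 1` and let `X` be a Banach space. Then
`H̊_p^{δ,m}(I,X) = H_p^{δ,m}(I,X)` if and only if `X` has the Radon–Nikodým property.

Here `I = [-1/2, 1/2)`, `H_p^{δ,m}(I,X)` is the maximal dyadic Hardy space of `X`-valued
dyadic martingales `F` with `‖F‖ = ‖F*‖_{L_p(I)} < ∞`, and `H̊_p^{δ,m}(I,X)` is the closure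
in it of the martingales coming from `L_1(I,X)` via the martingale transform
`δ(f) = (E(f|Δ_n))_n`. Dyadic martingales are modelled concretely: `F n` is constant on each
dyadic interval of level `n` and the averages are compatible between consecutive levels.
The RNP is formulated (as in the paper) through uniformly bounded dyadic martingales:
every uniformly bounded `X`-valued dyadic martingale is `δ(f)` for some `f ∈ L_∞(I,X)`.
-/

noncomputable section
open Filter Topology MeasureTheory ENNReal

def I₀ : Set ℝ := Set.Ico (-(1 : ℝ)/2) (1/2)

/-- The `j`-th dyadic subinterval of level `n` of `I = [-1/2, 1/2)` (for `0 ≤ j < 2^n`). -/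
def dyad (n : ℕ) (j : ℤ) : Set ℝ :=
  Set.Ico (-(1 : ℝ)/2 + (j : ℝ) * ((2 : ℝ) ^ n)⁻¹)
    (-(1 : ℝ)/2 + ((j : ℝ) + 1) * ((2 : ℝ) ^ n)⁻¹)

/-- The index of the level-`n` dyadic interval containing `t`. -/
def dyadIdx (n : ℕ) (t : ℝ) : ℤ := ⌊(t + 1/2) * 2 ^ n⌋

/-- `F` is an `X`-valued dyadic martingale over `I`: each `F n` is constant on the dyadic
intervals of level `n` (i.e. `Δ_n`-measurable) and `E(F (n+1) | Δ_n) = F n`. -/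
def IsDyadicMartingale {X : Type*} [NormedAddCommGroup X] [NormedSpace ℝ X]
    (F : ℕ → ℝ → X) : Prop :=
  ∀ n : ℕ, ∀ j : ℤ, 0 ≤ j → j < 2 ^ n →
    (∀ s ∈ dyad n j, ∀ t ∈ dyad n j, F n s = F n t) ∧
    (∫ t in dyad n j, F (n + 1) t) = ∫ t in dyad n j, F n t

/-- The maximal function `F* = sup_n ‖F n‖`. -/
def maxFn {X : Type*} [NormedAddCommGroup X] (F : ℕ → ℝ → X) (t : ℝ) : ℝ≥0∞ :=
  ⨆ n, (‖F n t‖₊ : ℝ≥0∞)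

/-- The quasi-norm of the maximal dyadic Hardy space: `‖F*‖_{L_p(I)}`. -/
def hNorm {X : Type*} [NormedAddCommGroup X] (p : ℝ) (F : ℕ → ℝ → X) : ℝ≥0∞ :=
  (∫⁻ t in I₀, (maxFn F t) ^ p) ^ (1/p)

/-- Membership in `H_p^{δ,m}(I,X)`. -/
def memHm {X : Type*} [NormedAddCommGroup X] [NormedSpace ℝ X] (p : ℝ)
    (F : ℕ → ℝ → X) : Prop :=
  IsDyadicMartingale F ∧ hNorm p F < ⊤

/-- The martingale transform `δ(f) = (E(f|Δ_n))_n`, computed through dyadic averages. -/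
def delta {X : Type*} [NormedAddCommGroup X] [NormedSpace ℝ X] (f : ℝ → X) :
    ℕ → ℝ → X :=
  fun n t => ((2 : ℝ) ^ n) • ∫ s in dyad n (dyadIdx n t), f s

/-- Membership in `H̊_p^{δ,m}(I,X)`, the closure of `H_p^{δ,m}(I,X) ∩ δ(L_1(I,X))` in
`H_p^{δ,m}(I,X)`. -/
def memH0m {X : Type*} [NormedAddCommGroup X] [NormedSpace ℝ X] (p : ℝ)
    (F : ℕ → ℝ → X) : Prop :=
  memHm p F ∧ ∀ ε : ℝ≥0∞, 0 < ε → ∃ g : ℝ → X,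
    Integrable g (volume.restrict I₀) ∧ memHm p (delta g) ∧ hNorm p (F - delta g) < ε

/-- `X` has the Radon–Nikodým property, formulated via dyadic martingales (as in the paper):
every uniformly bounded `X`-valued dyadic martingale is the martingale transform of a
function in `L_∞(I,X)`. -/
def HasRNP (X : Type*) [NormedAddCommGroup X] [NormedSpace ℝ X] : Prop :=
  ∀ F : ℕ → ℝ → X, IsDyadicMartingale F →
    (∃ M : ℝ, ∀ n : ℕ, ∀ t ∈ I₀, ‖F n t‖ ≤ M) →
    ∃ f : ℝ → X, Integrable f (volume.restrict I₀) ∧ (∃ M : ℝ, ∀ t ∈ I₀, ‖f t‖ ≤ M) ∧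
      ∀ n : ℕ, ∀ t ∈ I₀, delta f n t = F n t

lemma mem_dyad_iff (n : ℕ) (j : ℤ) (t : ℝ) : t ∈ dyad n j ↔ dyadIdx n t = j := by
  have h2 : (0 : ℝ) < 2 ^ n := by positivity
  unfold dyad dyadIdx
  rw [Int.floor_eq_iff, Set.mem_Ico, ← div_eq_mul_inv, ← div_eq_mul_inv]
  constructor
  · rintro ⟨h, h'⟩
    constructor
    · rw [← div_le_iff₀ h2]; linarith
    · rw [← lt_div_iff₀ h2]; linarith
  · rintro ⟨h, h'⟩
    rw [← div_le_iff₀ h2] at h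
    rw [← lt_div_iff₀ h2] at h'
    constructor <;> linarith

lemma self_mem_dyad (n : ℕ) (t : ℝ) : t ∈ dyad n (dyadIdx n t) := (mem_dyad_iff _ _ _).2 rfl

lemma mem_I₀_iff (n : ℕ) (t : ℝ) : t ∈ I₀ ↔ 0 ≤ dyadIdx n t ∧ dyadIdx n t < 2 ^ n := by
  have h2 : (0 : ℝ) < 2 ^ n := by positivity
  unfold I₀ dyadIdx
  rw [Int.floor_nonneg, Int.floor_lt, Set.mem_Ico]
  push_cast
  constructor
  · rintro ⟨h, h'⟩
    constructor
    · apply mul_nonneg _ h2.le; linarith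
    · nlinarith
  · rintro ⟨h, h'⟩
    have := nonneg_of_mul_nonneg_left h h2
    constructor
    · linarith
    · by_contra hc
      nlinarith

lemma dyad_subset_I₀ {n : ℕ} {j : ℤ} (h0 : 0 ≤ j) (h1 : j < 2 ^ n) : dyad n j ⊆ I₀ := by
  intro t ht
  rw [mem_dyad_iff] at ht
  rw [mem_I₀_iff n, ht]
  exact ⟨h0, h1⟩

lemma dyadIdx_succ (n : ℕ) (t : ℝ) : dyadIdx n t = dyadIdx (n + 1) t / 2 := by
  unfold dyadIdx
  have h : (t + 1/2) * 2 ^ (n+1) = 2 * ((t + 1/2) * 2 ^ n) := by ring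
  rw [h]
  generalize (t + 1/2) * 2 ^ n = x
  rw [Int.floor_eq_iff]
  have h1 := Int.floor_le (2 * x)
  have h2 := Int.lt_floor_add_one (2 * x)
  generalize ⌊2 * x⌋ = z at *
  have h3 : (z / 2) * 2 ≤ z := by omega
  have h4 : z + 1 ≤ (z / 2 + 1) * 2 := by omega
  have h3' : (((z / 2 : ℤ) : ℝ)) * 2 ≤ z := by exact_mod_cast h3
  have h4' : (z : ℝ) + 1 ≤ (((z / 2 : ℤ) : ℝ) + 1) * 2 := by exact_mod_cast h4
  constructor <;> linarith

lemma dyadIdx_mono {m n : ℕ} (hmn : m ≤ n) {s t : ℝ} (h : dyadIdx n s = dyadIdx n t) :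
    dyadIdx m s = dyadIdx m t := by
  induction n, hmn using Nat.le_induction with
  | base => exact h
  | succ n hn ih => exact ih (by rw [dyadIdx_succ n, dyadIdx_succ n, h])

lemma measurableSet_dyad (n : ℕ) (j : ℤ) : MeasurableSet (dyad n j) := measurableSet_Ico

lemma measurableSet_I₀ : MeasurableSet I₀ := measurableSet_Ico

lemma volume_dyad (n : ℕ) (j : ℤ) : volume (dyad n j) = ENNReal.ofReal ((2 ^ n)⁻¹) := by
  unfold dyad
  rw [Real.volume_Ico]
  congr 1
  ring

lemma volume_I₀ : volume I₀ = 1 := by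
  unfold I₀
  rw [Real.volume_Ico]
  norm_num

instance : IsFiniteMeasure (volume.restrict I₀ : Measure ℝ) :=
  ⟨by rw [Measure.restrict_apply_univ, volume_I₀]; exact ENNReal.one_lt_top⟩

instance (n : ℕ) (j : ℤ) : IsFiniteMeasure (volume.restrict (dyad n j) : Measure ℝ) :=
  ⟨by rw [Measure.restrict_apply_univ, volume_dyad]; exact ENNReal.ofReal_lt_top⟩

lemma dyad_split (n : ℕ) (j : ℤ) : dyad n j = dyad (n+1) (2*j) ∪ dyad (n+1) (2*j+1) := by
  ext t
  rw [Set.mem_union, mem_dyad_iff, mem_dyad_iff, mem_dyad_iff, dyadIdx_succ]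
  omega

lemma dyad_disj (n : ℕ) {i j : ℤ} (h : i ≠ j) : Disjoint (dyad n i) (dyad n j) := by
  rw [Set.disjoint_left]
  intro t ht ht'
  rw [mem_dyad_iff] at ht ht'
  exact h (ht.symm.trans ht')

lemma measurable_dyadIdx (n : ℕ) : Measurable (dyadIdx n) := by
  unfold dyadIdx
  fun_prop

section
variable {X : Type*} [NormedAddCommGroup X] [NormedSpace ℝ X]

lemma step_const {φ : ℝ → X} {n : ℕ}
    (h : ∀ j : ℤ, 0 ≤ j → j < 2 ^ n → ∀ s ∈ dyad n j, ∀ t ∈ dyad n j, φ s = φ t)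
    {s t : ℝ} (ht : t ∈ I₀) (hst : dyadIdx n s = dyadIdx n t) : φ s = φ t :=
  h _ ((mem_I₀_iff n t).1 ht).1 ((mem_I₀_iff n t).1 ht).2 s ((mem_dyad_iff _ _ _).2 hst) t
    (self_mem_dyad n t)

lemma step_aesm {φ : ℝ → X} {n : ℕ}
    (h : ∀ s ∈ I₀, ∀ t ∈ I₀, dyadIdx n s = dyadIdx n t → φ s = φ t) :
    AEStronglyMeasurable φ (volume.restrict I₀) := by
  classical
  let ψ : ℤ → X := fun j => if hj : ∃ s ∈ I₀, dyadIdx n s = j then φ hj.choose else 0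
  have hψ : StronglyMeasurable ψ := .of_discrete
  refine ⟨ψ ∘ dyadIdx n, hψ.comp_measurable (measurable_dyadIdx n), ?_⟩
  filter_upwards [ae_restrict_mem measurableSet_I₀] with t ht
  have hj : ∃ s ∈ I₀, dyadIdx n s = dyadIdx n t := ⟨t, ht, rfl⟩
  simp only [Function.comp, ψ, dif_pos hj]
  exact h _ ht _ hj.choose_spec.1 hj.choose_spec.2.symm

lemma mart_const {F : ℕ → ℝ → X} (hF : IsDyadicMartingale F) (n : ℕ) {s t : ℝ}
    (ht : t ∈ I₀) (hst : dyadIdx n s = dyadIdx n t) : F n s = F n t :=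
  step_const (fun j h0 h1 => (hF n j h0 h1).1) ht hst

lemma mart_aesm {F : ℕ → ℝ → X} (hF : IsDyadicMartingale F) (n : ℕ) :
    AEStronglyMeasurable (F n) (volume.restrict I₀) :=
  step_aesm (fun _ _ _ ht h => mart_const hF n ht h)

lemma delta_const (g : ℝ → X) (n : ℕ) {s t : ℝ} (h : dyadIdx n s = dyadIdx n t) :
    delta g n s = delta g n t := by
  unfold delta; rw [h]

lemma aemeas_maxFn {F : ℕ → ℝ → X}
    (h : ∀ n, AEStronglyMeasurable (F n) (volume.restrict I₀)) :
    AEMeasurable (maxFn F) (volume.restrict I₀) := by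
  unfold maxFn
  exact AEMeasurable.iSup fun n => (h n).enorm

lemma hNorm_lt_iff {F : ℕ → ℝ → X} {p : ℝ} (hp : 0 < p) (ε : ℝ≥0∞) :
    hNorm p F < ε ↔ ∫⁻ t in I₀, (maxFn F t) ^ p < ε ^ p := by
  unfold hNorm
  rw [one_div, ENNReal.rpow_inv_lt_iff hp]

lemma hNorm_congr {F G : ℕ → ℝ → X} {p : ℝ} (h : ∀ n, ∀ t ∈ I₀, F n t = G n t) :
    hNorm p F = hNorm p G := by
  unfold hNorm
  congr 1
  apply setLIntegral_congr_fun measurableSet_I₀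
  intro t ht
  simp only [maxFn, h _ t ht]

lemma mart_congr {F G : ℕ → ℝ → X} (h : ∀ n, ∀ t ∈ I₀, F n t = G n t)
    (hF : IsDyadicMartingale F) : IsDyadicMartingale G := by
  intro n j h0 h1
  have hs := dyad_subset_I₀ h0 h1
  obtain ⟨a, b⟩ := hF n j h0 h1
  refine ⟨fun s hs' t ht' => ?_, ?_⟩
  · rw [← h n s (hs hs'), ← h n t (hs ht'), a s hs' t ht']
  · rw [← setIntegral_congr_fun (measurableSet_dyad n j) (fun t ht => h (n+1) t (hs ht)),
      ← setIntegral_congr_fun (measurableSet_dyad n j) (fun t ht => h n t (hs ht)), b]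

lemma hNorm_bdd {F : ℕ → ℝ → X} {p : ℝ} (hp : 0 < p) {M : ℝ}
    (hM : ∀ n : ℕ, ∀ t ∈ I₀, ‖F n t‖ ≤ M) : hNorm p F < ⊤ := by
  rw [hNorm_lt_iff hp, ENNReal.top_rpow_of_pos hp]
  calc ∫⁻ t in I₀, (maxFn F t) ^ p ≤ ∫⁻ t in I₀, (ENNReal.ofReal M) ^ p := by
        apply setLIntegral_mono' measurableSet_I₀
        intro t ht
        gcongr
        apply iSup_le
        intro n
        rw [← enorm_eq_nnnorm, ← ofReal_norm]
        exact ENNReal.ofReal_le_ofReal (hM n t ht)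
    _ < ⊤ := by
        rw [setLIntegral_const, volume_I₀, mul_one]
        exact ENNReal.rpow_lt_top_of_nonneg hp.le ENNReal.ofReal_ne_top

/-- Lebesgue differentiation along dyadic intervals. -/
lemma delta_tendsto [CompleteSpace X] {g : ℝ → X} (hg : Integrable g (volume.restrict I₀)) :
    ∀ᵐ t ∂(volume.restrict I₀), ∃ l, Tendsto (fun n => delta g n t) atTop (𝓝 l) := by
  have hint : Integrable (I₀.indicator g) volume := (integrable_indicator_iff measurableSet_I₀).2 hg
  have key := IsUnifLocDoublingMeasure.ae_tendsto_average (volume : Measure ℝ)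
    hint.locallyIntegrable 1
  filter_upwards [ae_restrict_mem measurableSet_I₀, ae_restrict_of_ae key] with t ht hk
  refine ⟨I₀.indicator g t, ?_⟩
  let r : ℕ → ℝ := fun n => ((2:ℝ)^n)⁻¹ / 2
  let w : ℕ → ℝ := fun n => -1/2 + (dyadIdx n t : ℝ) * ((2:ℝ)^n)⁻¹ + r n
  have hr : ∀ n, 0 < r n := fun n => by positivity
  have hrlim : Tendsto r atTop (𝓝[>] 0) := by
    rw [tendsto_nhdsWithin_iff]
    refine ⟨?_, Eventually.of_forall hr⟩
    have : Tendsto (fun n : ℕ => ((2:ℝ)^n)⁻¹) atTop (𝓝 0) :=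
      (tendsto_pow_atTop_atTop_of_one_lt (by norm_num)).inv_tendsto_atTop
    simpa [r] using this.div_const 2
  have hball : ∀ n, Metric.closedBall (w n) (r n) =
      Set.Icc (-(1:ℝ)/2 + (dyadIdx n t : ℝ) * ((2:ℝ)^n)⁻¹)
        (-(1:ℝ)/2 + ((dyadIdx n t : ℝ) + 1) * ((2:ℝ)^n)⁻¹) := by
    intro n
    rw [Real.closedBall_eq_Icc]
    congr 1 <;> simp only [w, r] <;> ring
  have := hk w r hrlim (Eventually.of_forall fun n => by
    rw [one_mul, hball]
    exact Set.Ico_subset_Icc_self (self_mem_dyad n t))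
  refine this.congr fun n => ?_
  have h01 := (mem_I₀_iff n t).1 ht
  rw [hball, setAverage_eq, Measure.real, Real.volume_Icc, integral_Icc_eq_integral_Ico]
  change _ • ∫ x in dyad n (dyadIdx n t), I₀.indicator g x = _
  rw [setIntegral_congr_fun (g := g) (measurableSet_dyad n _) (fun x hx =>
    Set.indicator_of_mem (dyad_subset_I₀ h01.1 h01.2 hx) g)]
  unfold delta
  congr 1
  rw [ENNReal.toReal_ofReal (by ring_nf; positivity)]
  ring_nf
  simp

lemma mart_integral {F : ℕ → ℝ → X} (hF : IsDyadicMartingale F)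
    (hint : ∀ n, IntegrableOn (F n) I₀) (k : ℕ) : ∀ (n : ℕ) (j : ℤ), 0 ≤ j → j < 2 ^ n →
    ∫ t in dyad n j, F (n + k) t = ∫ t in dyad n j, F n t := by
  induction k with
  | zero => intros; rfl
  | succ k ih =>
    intro n j h0 h1
    have e1 : (2:ℤ)^(n+1) = 2 * 2^n := by ring
    have hs1 := dyad_subset_I₀ (n := n+1) (j := 2*j) (by omega) (by omega)
    have hs2 := dyad_subset_I₀ (n := n+1) (j := 2*j+1) (by omega) (by omega)
    have sp : ∀ m, ∫ t in dyad n j, F m t =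
        (∫ t in dyad (n+1) (2*j), F m t) + ∫ t in dyad (n+1) (2*j+1), F m t := by
      intro m
      rw [dyad_split, setIntegral_union (dyad_disj _ (by omega)) (measurableSet_dyad _ _)
        ((hint m).mono_set hs1) ((hint m).mono_set hs2)]
    rw [← (hF n j h0 h1).2, sp, sp (n+1), show n + (k+1) = (n+1) + k by ring,
      ih (n+1) _ (by omega) (by omega), ih (n+1) _ (by omega) (by omega)]

lemma forward [CompleteSpace X] {p : ℝ} (hp : 0 < p)
    (H : ∀ F : ℕ → ℝ → X, memHm p F → memH0m p F) : HasRNP X := by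
  classical
  rintro F hF ⟨M, hM⟩
  have h0I : (0:ℝ) ∈ I₀ := by unfold I₀; constructor <;> norm_num
  have hM0 : 0 ≤ M := (norm_nonneg _).trans (hM 0 0 h0I)
  have hclos := (H F ⟨hF, hNorm_bdd hp hM⟩).2
  have hch : ∀ k : ℕ, ∃ g : ℝ → X, Integrable g (volume.restrict I₀) ∧
      ∫⁻ t in I₀, (maxFn (F - delta g) t) ^ p < ((k:ℝ≥0∞) + 1)⁻¹ := by
    intro k
    obtain ⟨g, hg, -, h⟩ := hclos ((((k:ℝ≥0∞) + 1)⁻¹) ^ (1/p))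
      (ENNReal.rpow_pos (ENNReal.inv_pos.2 (by finiteness)) (by simp))
    refine ⟨g, hg, ?_⟩
    rw [hNorm_lt_iff hp, ← ENNReal.rpow_mul, one_div_mul_cancel hp.ne', ENNReal.rpow_one] at h
    exact h
  choose g hg hgk using hch
  have hmeas : ∀ k, AEMeasurable (fun t => maxFn (F - delta (g k)) t ^ p) (volume.restrict I₀) := by
    intro k
    refine AEMeasurable.pow_const (aemeas_maxFn fun n => ?_) p
    apply (mart_aesm hF n).sub
    exact step_aesm (n := n) fun s _ t _ h => delta_const _ n h
  have hinf : ∫⁻ t in I₀, ⨅ k, (maxFn (F - delta (g k)) t ^ p) = 0 := by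
    have h1 : ∀ k : ℕ, ∫⁻ t in I₀, ⨅ k, (maxFn (F - delta (g k)) t ^ p) ≤ ((k:ℝ≥0∞) + 1)⁻¹ :=
      fun k => (lintegral_mono fun t => iInf_le _ k).trans (hgk k).le
    have h2 := (ENNReal.tendsto_inv_nat_nhds_zero).comp (tendsto_add_atTop_nat 1)
    have h3 : Tendsto (fun k : ℕ => ((k:ℝ≥0∞) + 1)⁻¹) atTop (𝓝 0) := by
      simpa [Function.comp_def] using h2
    exact le_antisymm (ge_of_tendsto' h3 h1) zero_le
  rw [lintegral_eq_zero_iff' (AEMeasurable.iInf hmeas)] at hinf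
  have hconv : ∀ᵐ t ∂(volume.restrict I₀), ∃ l, Tendsto (fun n => F n t) atTop (𝓝 l) := by
    filter_upwards [hinf, ae_all_iff.2 fun k => delta_tendsto (hg k)] with t ht hl
    apply cauchySeq_tendsto_of_complete
    rw [Metric.cauchySeq_iff']
    intro ε hε
    have hpos : (0:ℝ≥0∞) < ENNReal.ofReal (ε/3) ^ p :=
      ENNReal.rpow_pos (by simpa using hε) (by simp)
    have : ⨅ k, (maxFn (F - delta (g k)) t ^ p) < ENNReal.ofReal (ε/3) ^ p := by
      rw [show (⨅ k, (maxFn (F - delta (g k)) t ^ p)) = 0 from ht]; exact hpos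
    obtain ⟨k, hk⟩ := iInf_lt_iff.1 this
    rw [ENNReal.rpow_lt_rpow_iff hp] at hk
    have hd : ∀ n, dist (F n t) (delta (g k) n t) < ε/3 := by
      intro n
      have h1 : (‖(F - delta (g k)) n t‖₊ : ℝ≥0∞) < ENNReal.ofReal (ε/3) :=
        (le_iSup (fun n => (‖(F - delta (g k)) n t‖₊ : ℝ≥0∞)) n).trans_lt hk
      rw [← enorm_eq_nnnorm, ← ofReal_norm, ENNReal.ofReal_lt_ofReal_iff (by positivity)] at h1
      rw [dist_eq_norm]; exact h1
    obtain ⟨l, hl⟩ := hl k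
    obtain ⟨N, hN⟩ := Metric.cauchySeq_iff'.1 hl.cauchySeq (ε/3) (by positivity)
    refine ⟨N, fun n hn => ?_⟩
    have := dist_triangle4 (F n t) (delta (g k) n t) (delta (g k) N t) (F N t)
    have h1 := hd n
    have h2 := hd N
    have h3 := hN n hn
    rw [dist_comm] at h2
    linarith
  let f : ℝ → X := fun t =>
    if h : t ∈ I₀ ∧ ∃ l, Tendsto (fun n => F n t) atTop (𝓝 l) then h.2.choose else 0
  have hfM : ∀ t, ‖f t‖ ≤ M := by
    intro t
    by_cases h : t ∈ I₀ ∧ ∃ l, Tendsto (fun n => F n t) atTop (𝓝 l)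
    · simp only [f, dif_pos h]
      exact le_of_tendsto' h.2.choose_spec.norm fun n => hM n t h.1
    · simp only [f, dif_neg h, norm_zero, hM0]
  have hflim : ∀ᵐ t ∂(volume.restrict I₀), Tendsto (fun n => F n t) atTop (𝓝 (f t)) := by
    filter_upwards [hconv, ae_restrict_mem measurableSet_I₀] with t ht htI
    have h : t ∈ I₀ ∧ ∃ l, Tendsto (fun n => F n t) atTop (𝓝 l) := ⟨htI, ht⟩
    simp only [f, dif_pos h]
    exact h.2.choose_spec
  have hfm : AEStronglyMeasurable f (volume.restrict I₀) :=
    aestronglyMeasurable_of_tendsto_ae atTop (mart_aesm hF) hflim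
  have hFint : ∀ n, IntegrableOn (F n) I₀ := fun n =>
    Integrable.of_bound (mart_aesm hF n) M (by
      filter_upwards [ae_restrict_mem measurableSet_I₀] with t ht using hM n t ht)
  refine ⟨f, Integrable.of_bound hfm M (Eventually.of_forall hfM), ⟨M, fun t _ => hfM t⟩, ?_⟩
  intro n t ht
  have h01 := (mem_I₀_iff n t).1 ht
  have hs := dyad_subset_I₀ h01.1 h01.2
  have hlim : Tendsto (fun m => ∫ x in dyad n (dyadIdx n t), F m x) atTop
      (𝓝 (∫ x in dyad n (dyadIdx n t), f x)) := by
    apply tendsto_integral_of_dominated_convergence (fun _ => M)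
    · exact fun m => (mart_aesm hF m).mono_set hs
    · exact integrable_const M
    · intro m
      filter_upwards [ae_restrict_mem (measurableSet_dyad _ _)] with x hx using hM m x (hs hx)
    · exact ae_restrict_of_ae_restrict_of_subset hs hflim
  have hlim2 := (hlim.comp (tendsto_add_atTop_nat n))
  have hc : ∀ k, ((fun m => ∫ x in dyad n (dyadIdx n t), F m x) ∘ fun a => a + n) k =
      ∫ x in dyad n (dyadIdx n t), F n x := by
    intro k
    simp only [Function.comp]
    rw [add_comm]
    exact mart_integral hF hFint k n _ h01.1 h01.2
  have heq := tendsto_nhds_unique hlim2 ((tendsto_congr hc).2 tendsto_const_nhds)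
  unfold delta
  rw [heq, setIntegral_congr_fun (g := fun _ => F n t) (measurableSet_dyad n _) (fun x hx =>
    mart_const hF n ht ((mem_dyad_iff _ _ _).1 hx)), setIntegral_const, Measure.real, volume_dyad,
    ENNReal.toReal_ofReal (by positivity), smul_smul, mul_inv_cancel₀ (by positivity), one_smul]

/-- Some child of the level-`m` interval around `t` carries a value of norm `> lam`. -/
def bigAt (F : ℕ → ℝ → X) (lam : ℝ) (m : ℕ) (t : ℝ) : Prop :=
  ∃ s ∈ dyad m (dyadIdx m t), lam < ‖F (m + 1) s‖

lemma bigAt_congr (F : ℕ → ℝ → X) (lam : ℝ) {m n : ℕ} (h : m ≤ n) {s t : ℝ}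
    (hst : dyadIdx n s = dyadIdx n t) : bigAt F lam m s ↔ bigAt F lam m t := by
  unfold bigAt
  rw [dyadIdx_mono h hst]

open Classical in
/-- The stopped martingale. -/
def stopped (F : ℕ → ℝ → X) (lam : ℝ) : ℕ → ℝ → X
  | 0, t => F 0 t
  | n + 1, t => if ∃ m ≤ n, bigAt F lam m t then stopped F lam n t else F (n + 1) t

lemma stopped_eq (F : ℕ → ℝ → X) (lam : ℝ) (n : ℕ) (t : ℝ)
    (h : ∀ m < n, ¬ bigAt F lam m t) : stopped F lam n t = F n t := by
  cases n with
  | zero => rfl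
  | succ n =>
    rw [stopped, if_neg]
    rintro ⟨m, hm, hb⟩
    exact h m (by omega) hb

lemma stopped_const {F : ℕ → ℝ → X} (hF : IsDyadicMartingale F) (lam : ℝ) (n : ℕ) {s t : ℝ}
    (ht : t ∈ I₀) (hst : dyadIdx n s = dyadIdx n t) :
    stopped F lam n s = stopped F lam n t := by
  induction n with
  | zero => exact mart_const hF 0 ht hst
  | succ n ih =>
    have h1 := dyadIdx_mono (Nat.le_succ n) hst
    have h2 : (∃ m ≤ n, bigAt F lam m s) ↔ (∃ m ≤ n, bigAt F lam m t) :=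
      exists_congr fun m => and_congr_right fun hm => bigAt_congr F lam hm h1
    have e1 := mart_const hF (n+1) ht hst
    have e2 := ih h1
    by_cases h : ∃ m ≤ n, bigAt F lam m t
    · simp only [stopped]
      rw [if_pos h, if_pos (h2.2 h), e2]
    · simp only [stopped]
      rw [if_neg h, if_neg (fun h' => h (h2.1 h')), e1]

lemma stopped_mart {F : ℕ → ℝ → X} (hF : IsDyadicMartingale F) (lam : ℝ) :
    IsDyadicMartingale (stopped F lam) := by
  intro n j h0 h1
  have hs := dyad_subset_I₀ h0 h1
  refine ⟨fun s hs' t ht => stopped_const hF lam n (hs ht) ?_, ?_⟩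
  · rw [(mem_dyad_iff _ _ _).1 hs', (mem_dyad_iff _ _ _).1 ht]
  by_cases hb : ∃ s ∈ dyad n j, ∃ m ≤ n, bigAt F lam m s
  · obtain ⟨s, hs', m, hm, hb⟩ := hb
    apply setIntegral_congr_fun (measurableSet_dyad n j)
    intro t ht
    have hst : dyadIdx n s = dyadIdx n t := by
      rw [(mem_dyad_iff _ _ _).1 hs', (mem_dyad_iff _ _ _).1 ht]
    simp only [stopped]
    rw [if_pos ⟨m, hm, (bigAt_congr F lam hm hst).1 hb⟩]
  · push Not at hb
    rw [setIntegral_congr_fun (g := F (n+1)) (measurableSet_dyad n j) (fun t ht =>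
        stopped_eq F lam (n+1) t (fun m hm => hb t ht m (by omega))),
      setIntegral_congr_fun (g := F n) (measurableSet_dyad n j) (fun t ht =>
        stopped_eq F lam n t (fun m hm => hb t ht m (by omega)))]
    exact (hF n j h0 h1).2

lemma stopped_bdd {F : ℕ → ℝ → X} (hF : IsDyadicMartingale F) (lam : ℝ) (n : ℕ) (t : ℝ)
    (ht : t ∈ I₀) : ‖stopped F lam n t‖ ≤ max lam ‖F 0 0‖ := by
  have h0I : (0:ℝ) ∈ I₀ := by unfold I₀; constructor <;> norm_num
  induction n with
  | zero =>
    have h1 := (mem_I₀_iff 0 t).1 ht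
    have h2 := (mem_I₀_iff 0 0).1 h0I
    rw [stopped, mart_const hF 0 (s := t) h0I (by simp at h1 h2; omega)]
    exact le_max_right _ _
  | succ n ih =>
    rw [stopped]
    split_ifs with h
    · exact ih
    · push Not at h
      have := h n le_rfl
      unfold bigAt at this
      push Not at this
      exact (this t (self_mem_dyad n t)).trans (le_max_left _ _)

lemma stopped_le_maxFn (F : ℕ → ℝ → X) (lam : ℝ) (n : ℕ) (t : ℝ) :
    (‖stopped F lam n t‖₊ : ℝ≥0∞) ≤ maxFn F t := by
  have h : ∀ n, (‖F n t‖₊ : ℝ≥0∞) ≤ maxFn F t := fun n => le_iSup (fun n => (‖F n t‖₊ : ℝ≥0∞)) n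
  induction n with
  | zero => exact h 0
  | succ n ih =>
    rw [stopped]
    split_ifs
    · exact ih
    · exact h _

/-- The set where stopping occurs. -/
def stopSet (F : ℕ → ℝ → X) (lam : ℝ) : Set ℝ := {t | ∃ m, bigAt F lam m t}

lemma maxFn_diff_le (F : ℕ → ℝ → X) (lam : ℝ) (t : ℝ) :
    maxFn (F - stopped F lam) t ≤ (stopSet F lam).indicator (fun t => 2 * maxFn F t) t := by
  apply iSup_le
  intro n
  by_cases h : t ∈ stopSet F lam
  · rw [Set.indicator_of_mem h, two_mul]
    have h1 : (‖(F - stopped F lam) n t‖₊ : ℝ≥0∞) ≤ ‖F n t‖₊ + ‖stopped F lam n t‖₊ := by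
      exact_mod_cast nnnorm_sub_le (F n t) (stopped F lam n t)
    exact h1.trans (add_le_add (le_iSup (fun n => (‖F n t‖₊ : ℝ≥0∞)) n) (stopped_le_maxFn F lam n t))
  · have : (F - stopped F lam) n t = 0 := by
      simp only [Pi.sub_apply]
      rw [stopped_eq F lam n t (fun m _ hb => h ⟨m, hb⟩), sub_self]
    rw [this]
    simp

lemma stopSet_volume {F : ℕ → ℝ → X} (hF : IsDyadicMartingale F) (lam : ℝ) :
    volume.restrict I₀ (stopSet F lam) ≤
      2 * volume.restrict I₀ {t | ENNReal.ofReal lam ≤ maxFn F t} := by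
  classical
  set E : Set ℝ := {t | ENNReal.ofReal lam ≤ maxFn F t} with hE
  let A : Set (ℕ × ℤ) := {q | 0 ≤ q.2 ∧ q.2 < 2 ^ q.1 ∧
    ∀ t ∈ dyad q.1 q.2, bigAt F lam q.1 t ∧ ∀ m < q.1, ¬ bigAt F lam m t}
  have hA : A.Countable := Set.to_countable A
  have hcover : stopSet F lam ∩ I₀ ⊆ ⋃ q ∈ A, dyad q.1 q.2 := by
    rintro t ⟨ht, htI⟩
    have hex : ∃ m, bigAt F lam m t := ht
    have h01 := (mem_I₀_iff (Nat.find hex) t).1 htI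
    refine Set.mem_biUnion (x := (Nat.find hex, dyadIdx (Nat.find hex) t))
      ⟨h01.1, h01.2, fun s hs => ?_⟩ (self_mem_dyad _ _)
    have hs' := (mem_dyad_iff _ _ _).1 hs
    refine ⟨(bigAt_congr F lam le_rfl hs').2 (Nat.find_spec hex), fun m hm hb => ?_⟩
    exact Nat.find_min hex hm ((bigAt_congr F lam hm.le hs').1 hb)
  have hone : ∀ q ∈ A, volume (dyad q.1 q.2) ≤ 2 * (volume.restrict I₀).restrict E (dyad q.1 q.2) := by
    rintro ⟨m, j⟩ ⟨h0, h1, hq⟩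
    have hs := dyad_subset_I₀ h0 h1
    simp only at *
    have hne : dyad m j ≠ ∅ := by
      intro he
      have := volume_dyad m j
      rw [he, measure_empty] at this
      have h2 : (0:ℝ) < (2^m)⁻¹ := by positivity
      exact absurd this.symm (ENNReal.ofReal_pos.2 h2).ne'
    obtain ⟨t, ht⟩ := Set.nonempty_iff_ne_empty.2 hne
    obtain ⟨s, hsd, hsb⟩ := (hq t ht).1
    rw [(mem_dyad_iff _ _ _).1 ht] at hsd
    have hsub : dyad (m+1) (dyadIdx (m+1) s) ⊆ dyad m j ∩ E ∩ I₀ := by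
      intro u hu
      have hu' := (mem_dyad_iff _ _ _).1 hu
      have hum : u ∈ dyad m j := by
        rw [mem_dyad_iff, dyadIdx_mono (Nat.le_succ m) hu', (mem_dyad_iff _ _ _).1 hsd]
      refine ⟨⟨hum, ?_⟩, hs hum⟩
      rw [← mart_const hF (m+1) (hs hsd) hu'] at hsb
      refine le_trans ?_ (le_iSup (fun n => (‖F n u‖₊ : ℝ≥0∞)) (m+1))
      rw [← enorm_eq_nnnorm, ← ofReal_norm]
      exact ENNReal.ofReal_le_ofReal hsb.le
    rw [Measure.restrict_apply (measurableSet_dyad _ _),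
      Measure.restrict_apply' measurableSet_I₀]
    calc volume (dyad m j) = 2 * volume (dyad (m+1) (dyadIdx (m+1) s)) := by
          rw [volume_dyad, volume_dyad, ← ENNReal.ofReal_ofNat, ← ENNReal.ofReal_mul (by norm_num)]
          congr 1
          rw [pow_succ]; field_simp
      _ ≤ _ := by gcongr
  have hdisj : A.PairwiseDisjoint (fun q => dyad q.1 q.2) := by
    rintro ⟨m, j⟩ hq ⟨m', j'⟩ hq' hne
    rw [Function.onFun, Set.disjoint_left]
    intro t ht ht'
    apply hne
    obtain ⟨-, -, h⟩ := hq
    obtain ⟨-, -, h'⟩ := hq'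
    have hm : m = m' := by
      rcases lt_trichotomy m m' with hlt | heq | hgt
      · exact absurd (h t ht).1 ((h' t ht').2 m hlt)
      · exact heq
      · exact absurd (h' t ht').1 ((h t ht).2 m' hgt)
    subst hm
    have hj : j = j' := ((mem_dyad_iff _ _ _).1 ht).symm.trans ((mem_dyad_iff _ _ _).1 ht')
    rw [hj]
  rw [Measure.restrict_apply' measurableSet_I₀]
  calc volume (stopSet F lam ∩ I₀) ≤ volume (⋃ q ∈ A, dyad q.1 q.2) := measure_mono hcover
    _ ≤ ∑' q : A, volume (dyad q.1.1 q.1.2) := measure_biUnion_le _ hA _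
    _ ≤ ∑' q : A, 2 * (volume.restrict I₀).restrict E (dyad q.1.1 q.1.2) :=
        ENNReal.tsum_le_tsum fun q => hone q.1 q.2
    _ = 2 * (volume.restrict I₀).restrict E (⋃ q ∈ A, dyad q.1 q.2) := by
        rw [ENNReal.tsum_mul_left, measure_biUnion hA hdisj (fun q _ => measurableSet_dyad _ _)]
    _ ≤ 2 * volume.restrict I₀ E := by
        refine mul_le_mul_right ?_ 2
        refine (measure_mono (Set.subset_univ _)).trans ?_
        rw [Measure.restrict_apply_univ]

lemma stopSet_tendsto {F : ℕ → ℝ → X} (hF : IsDyadicMartingale F) {p : ℝ} (hp : 0 < p)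
    (hfin : ∫⁻ t in I₀, (maxFn F t) ^ p ≠ ⊤) :
    Tendsto (fun k : ℕ => volume.restrict I₀ (stopSet F k)) atTop (𝓝 0) := by
  set C := ∫⁻ t in I₀, (maxFn F t) ^ p with hC
  have hb : ∀ k : ℕ, 1 ≤ k → volume.restrict I₀ (stopSet F k) ≤ 2 * (C / ((k:ℝ≥0∞) ^ p)) := by
    intro k hk
    refine (stopSet_volume hF k).trans ?_
    gcongr
    have hm : AEMeasurable (fun t => maxFn F t ^ p) (volume.restrict I₀) :=
      (aemeas_maxFn (mart_aesm hF)).pow_const p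
    have hk0 : (k:ℝ≥0∞) ^ p ≠ 0 := by
      have : (0:ℝ≥0∞) < k := by exact_mod_cast hk
      exact (ENNReal.rpow_pos this (by simp)).ne'
    have := meas_ge_le_lintegral_div hm hk0
      (ENNReal.rpow_ne_top_of_nonneg hp.le (ENNReal.natCast_ne_top k))
    refine le_trans (measure_mono ?_) this
    intro t ht
    simp only [Set.mem_ofPred_eq, ENNReal.ofReal_natCast] at ht ⊢
    gcongr
  have hlim : Tendsto (fun k : ℕ => 2 * (C / ((k:ℝ≥0∞) ^ p))) atTop (𝓝 0) := by
    have h1 : Tendsto (fun k : ℕ => (k:ℝ≥0∞) ^ p) atTop (𝓝 ⊤) := by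
      have := (ENNReal.continuous_rpow_const (y := p)).tendsto ⊤
      rw [ENNReal.top_rpow_of_pos hp] at this
      exact this.comp ENNReal.tendsto_nat_nhds_top
    have h2 := ENNReal.Tendsto.const_div (a := C) h1 (Or.inr hfin)
    have h3 := ENNReal.Tendsto.const_mul (a := 2) h2 (Or.inr (by simp))
    simpa using h3
  refine tendsto_of_tendsto_of_tendsto_of_le_of_le' tendsto_const_nhds hlim
    (Eventually.of_forall fun _ => zero_le) ?_
  filter_upwards [eventually_ge_atTop 1] with k hk using hb k hk

lemma backward {p : ℝ} (hp : 0 < p) (H : HasRNP X) (F : ℕ → ℝ → X) (hF : memHm p F) :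
    memH0m p F := by
  refine ⟨hF, fun ε hε => ?_⟩
  obtain ⟨hFm, hFn⟩ := hF
  rw [hNorm_lt_iff hp, ENNReal.top_rpow_of_pos hp] at hFn
  have hfin2 : ∫⁻ t in I₀, (2 * maxFn F t) ^ p ≠ ⊤ := by
    simp_rw [ENNReal.mul_rpow_of_nonneg _ _ hp.le]
    rw [lintegral_const_mul' _ _ (ENNReal.rpow_ne_top_of_nonneg hp.le (by simp))]
    exact ENNReal.mul_ne_top (ENNReal.rpow_ne_top_of_nonneg hp.le (by simp)) hFn.ne
  have hlim := tendsto_setLIntegral_zero hfin2 (stopSet_tendsto hFm hp hFn.ne)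
  obtain ⟨k, hk⟩ := (hlim.eventually (gt_mem_nhds (ENNReal.rpow_pos_of_nonneg hε hp.le))).exists
  have hbd := stopped_bdd hFm k
  obtain ⟨f, hf, -, hfd⟩ := H _ (stopped_mart hFm k) ⟨_, hbd⟩
  have hfd' : ∀ n : ℕ, ∀ t ∈ I₀, stopped F k n t = delta f n t := fun n t ht => (hfd n t ht).symm
  refine ⟨f, hf, ⟨mart_congr hfd' (stopped_mart hFm k), ?_⟩, ?_⟩
  · rw [← hNorm_congr hfd']
    exact hNorm_bdd hp hbd
  · rw [← hNorm_congr (F := F - stopped F k) (fun n t ht => by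
      simp only [Pi.sub_apply, hfd' n t ht]), hNorm_lt_iff hp]
    refine lt_of_le_of_lt ?_ hk
    refine le_trans (lintegral_mono fun t => ?_) (lintegral_indicator_le _ _)
    refine (ENNReal.rpow_le_rpow (maxFn_diff_le F k t) hp.le).trans ?_
    by_cases h : t ∈ stopSet F k
    · simp [h]
    · simp [h, hp]

end

theorem H0m_eq_Hm_iff_RNP {X : Type*} [NormedAddCommGroup X] [NormedSpace ℝ X]
    [CompleteSpace X] (p : ℝ) (hp : 0 < p) (hp1 : p ≤ 1) :
    (∀ F : ℕ → ℝ → X, memHm p F → memH0m p F) ↔ HasRNP X := by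
  exact ⟨forward hp, fun H F hF => backward hp H F hF⟩

end
end

section
/- Let 0<p≤1 and X be a complex Banach space. For every F∈H_p(𝔻,X) the limit Γ(F)(g) := lim_{s→1⁻} ∫_{−1/2}^{1/2} F(s e^{2πit}) g(t) dt exists for every g∈C^∞(𝕋,ℂ) and defines an element Γ(F)∈D'(𝕋,X); moreover Γ: H_p(𝔻,X)→D'(𝕋,X) is linear and continuous. -/
/-!
Statement 9: Let `0 < p ≤ 1` and `X` be a complex Banach space. For every `F ∈ H_p(𝔻,X)` the
limit `Γ(F)(g) := lim_{s→1⁻} ∫_{-1/2}^{1/2} F(s e^{2πit}) g(t) dt` exists for every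
`g ∈ C^∞(𝕋,ℂ)` and defines an element `Γ(F) ∈ D'(𝕋,X)`; moreover `Γ : H_p(𝔻,X) → D'(𝕋,X)`
is linear and continuous (bounded by `‖F‖_{H_p}` times finitely many test-function
seminorms).
-/

noncomputable section
open Filter Topology MeasureTheory ENNReal

def circlePt (r t : ℝ) : ℂ := (r : ℂ) * Complex.exp (2 * Real.pi * t * Complex.I)

def hpIntegral {X : Type*} [NormedAddCommGroup X] (p : ℝ) (F : ℂ → X) (r : ℝ) : ℝ≥0∞ :=
  ∫⁻ t in I₀, (‖F (circlePt r t)‖₊ : ℝ≥0∞) ^ p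

/-- Membership in the Hardy space `H_p(𝔻,X)`. -/
def memHpD {X : Type*} [NormedAddCommGroup X] [NormedSpace ℂ X] (p : ℝ) (F : ℂ → X) : Prop :=
  DifferentiableOn ℂ F (Metric.ball 0 1) ∧
  ∃ B : ℝ≥0∞, B < ⊤ ∧ ∀ r : ℝ, 0 ≤ r → r < 1 → hpIntegral p F r ≤ B

/-- The quasi-norm of `H_p(𝔻,X)` (with values in `[0,∞]`). -/
def qHpD {X : Type*} [NormedAddCommGroup X] (p : ℝ) (F : ℂ → X) : ℝ≥0∞ :=
  ⨆ r : Set.Ico (0 : ℝ) 1, (hpIntegral p F r.1) ^ (1/p)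

/-- Smooth `1`-periodic complex test functions on the circle. -/
def Smooth1PeriodicC (g : ℝ → ℂ) : Prop := ContDiff ℝ (⊤ : ℕ∞) g ∧ ∀ t, g (t + 1) = g t

def testSeminormC (i : ℕ) (g : ℝ → ℂ) : ℝ :=
  ⨆ t : Set.Icc (0 : ℝ) 1, ‖iteratedDeriv i g t‖

/-- `u ∈ D'(𝕋,X)`: linear and continuous on smooth `1`-periodic test functions. -/
def IsPeriodicDistributionC {X : Type*} [NormedAddCommGroup X] [NormedSpace ℂ X]
    (u : (ℝ → ℂ) → X) : Prop :=
  (∀ g h, Smooth1PeriodicC g → Smooth1PeriodicC h → u (g + h) = u g + u h) ∧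
  (∀ (c : ℂ) (g), Smooth1PeriodicC g → u (c • g) = c • u g) ∧
  ∃ (k : ℕ) (C : ℝ), ∀ g, Smooth1PeriodicC g →
    ‖u g‖ ≤ C * ∑ i ∈ Finset.range (k + 1), testSeminormC i g

lemma circlePt_eq (r t : ℝ) : circlePt r t = circleMap 0 r (2 * Real.pi * t) := by
  simp [circlePt, circleMap]

lemma norm_circlePt {r : ℝ} (hr : 0 ≤ r) (t : ℝ) : ‖circlePt r t‖ = r := by
  rw [circlePt_eq, norm_circleMap_zero, abs_of_nonneg hr]

lemma continuous_circlePt (r : ℝ) : Continuous (circlePt r) := by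
  unfold circlePt; fun_prop

lemma continuous_comp_circlePt {X : Type*} [NormedAddCommGroup X] [NormedSpace ℂ X] {F : ℂ → X}
    (hF : DifferentiableOn ℂ F (Metric.ball 0 1)) {r : ℝ} (hr : 0 ≤ r) (hr1 : r < 1) :
    Continuous (fun t => F (circlePt r t)) :=
  hF.continuousOn.comp_continuous (continuous_circlePt r)
    (fun t => by simpa [norm_circlePt hr] using hr1)

lemma integral_I₀ {E : Type*} [NormedAddCommGroup E] [NormedSpace ℝ E] (f : ℝ → E) :
    ∫ t in I₀, f t = ∫ t in (-(1 : ℝ)/2)..(1/2), f t := by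
  rw [intervalIntegral.integral_of_le (by norm_num), I₀, integral_Ico_eq_integral_Ioc]

lemma integrableOn_I₀ {E : Type*} [NormedAddCommGroup E] {f : ℝ → E}
    (hf : Continuous f) : IntegrableOn f I₀ :=
  (hf.continuousOn.integrableOn_Icc (a := -(1 : ℝ)/2) (b := 1/2)).mono_set Set.Ico_subset_Icc_self

lemma circle_change {f : ℂ → ℝ} (R : ℝ) :
    ∫ θ in (0 : ℝ)..(2 * Real.pi), f (circleMap 0 R θ)
      = 2 * Real.pi * ∫ t in I₀, f (circlePt R t) := by
  have hper : Function.Periodic (fun θ => f (circleMap 0 R θ)) (2 * Real.pi) :=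
    fun θ => by simp [periodic_circleMap 0 R θ]
  have h1 := hper.intervalIntegral_add_eq 0 (-Real.pi)
  have h2 := intervalIntegral.smul_integral_comp_mul_left (a := -(1 : ℝ)/2) (b := 1/2)
    (fun θ => f (circleMap 0 R θ)) (2 * Real.pi)
  rw [integral_I₀]
  simp only [circlePt_eq]
  rw [smul_eq_mul] at h2
  rw [h2]
  rw [zero_add] at h1
  rw [h1]
  congr 1 <;> ring

lemma cauchy_bound {X : Type*} [NormedAddCommGroup X] [NormedSpace ℂ X] [CompleteSpace X]
    {F : ℂ → X} (hF : DifferentiableOn ℂ F (Metric.ball 0 1)) {R : ℝ} (hR1 : R < 1)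
    {w : ℂ} (hw : ‖w‖ < R) :
    ‖F w‖ ≤ R / (R - ‖w‖) * ∫ t in I₀, ‖F (circlePt R t)‖ := by
  have hR : 0 < R := (norm_nonneg w).trans_lt hw
  have hcl : DiffContOnCl ℂ F (Metric.ball 0 R) := by
    apply DifferentiableOn.diffContOnCl_ball (U := Metric.ball 0 1) hF
    exact Metric.closedBall_subset_ball hR1
  have h := hcl.two_pi_i_inv_smul_circleIntegral_sub_inv_smul (w := w) (by simpa using hw)
  rw [← h, norm_smul]
  have hc : ContinuousOn F (Metric.ball 0 1) := hF.continuousOn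
  have hcont : Continuous (fun θ => F (circleMap 0 R θ)) :=
    hc.comp_continuous (continuous_circleMap 0 R) (fun θ => by simpa [abs_of_pos hR] using hR1)
  have hle : ‖∮ z in C(0, R), (z - w)⁻¹ • F z‖ ≤
      ∫ θ in (0 : ℝ)..(2 * Real.pi), R / (R - ‖w‖) * ‖F (circleMap 0 R θ)‖ := by
    unfold circleIntegral
    apply intervalIntegral.norm_integral_le_of_norm_le (by positivity)
    · refine Eventually.of_forall fun θ _ => ?_
      rw [norm_smul, norm_smul, ← mul_assoc]
      gcongr
      rw [norm_inv, div_eq_mul_inv]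
      have h1 : ‖deriv (circleMap 0 R) θ‖ = R := by simp [abs_of_pos hR]
      rw [h1]
      gcongr
      · have := norm_sub_norm_le (circleMap 0 R θ) w
        simpa [abs_of_pos hR] using this
    · exact (continuous_const.mul hcont.norm).intervalIntegrable _ _
  rw [intervalIntegral.integral_const_mul, circle_change (f := fun z => ‖F z‖)] at hle
  have hpi := Real.pi_pos
  have h2 : ‖(2 * Real.pi * Complex.I : ℂ)⁻¹‖ = (2 * Real.pi)⁻¹ := by
    simp [abs_of_pos hpi]
  rw [h2]
  calc (2 * Real.pi)⁻¹ * ‖∮ z in C(0, R), (z - w)⁻¹ • F z‖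
      ≤ (2 * Real.pi)⁻¹ * (R / (R - ‖w‖) * (2 * Real.pi * ∫ t in I₀, ‖F (circlePt R t)‖)) := by
        gcongr
    _ = _ := by field_simp

lemma mean_p {X : Type*} [NormedAddCommGroup X] [NormedSpace ℂ X]
    {p : ℝ} (hp : 0 < p) {Q : ℝ} (hQ : 0 ≤ Q) {F : ℂ → X}
    (hF : DifferentiableOn ℂ F (Metric.ball 0 1)) {r : ℝ} (hr : 0 ≤ r) (hr1 : r < 1)
    (h : hpIntegral p F r ≤ ENNReal.ofReal (Q ^ p)) :
    ∫ t in I₀, ‖F (circlePt r t)‖ ^ p ≤ Q ^ p := by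
  have hc := continuous_comp_circlePt hF hr hr1
  have hc2 : Continuous (fun t => ‖F (circlePt r t)‖ ^ p) :=
    hc.norm.rpow_const (fun _ => Or.inr hp.le)
  rw [← ENNReal.ofReal_le_ofReal_iff (by positivity), ofReal_integral_eq_lintegral_ofReal
    (integrableOn_I₀ hc2) (Eventually.of_forall fun t => by positivity)]
  refine le_trans (le_of_eq ?_) h
  unfold hpIntegral
  congr 1
  ext t
  rw [← ENNReal.ofReal_rpow_of_nonneg (norm_nonneg _) hp.le, ofReal_norm]
  rfl

lemma growth_aux {X : Type*} [NormedAddCommGroup X] [NormedSpace ℂ X] [CompleteSpace X]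
    {p : ℝ} (hp : 0 < p) (hp1 : p ≤ 1) {Q : ℝ} (hQ : 0 ≤ Q) {F : ℂ → X}
    (hF : DifferentiableOn ℂ F (Metric.ball 0 1))
    (h : ∀ r : ℝ, 0 ≤ r → r < 1 → hpIntegral p F r ≤ ENNReal.ofReal (Q ^ p))
    {s : ℝ} (hs : 0 < s) (hs1 : s < 1) {z : ℂ} (hz : ‖z‖ ≤ s) :
    ‖F z‖ * (s - ‖z‖) ^ (1/p) ≤ ((2 : ℝ) ^ (1/p)) ^ (1/p) * Q := by
  have ha : 0 < 1/p := by positivity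
  have hcont : ContinuousOn (fun z : ℂ => ‖F z‖ * (s - ‖z‖) ^ (1/p)) (Metric.closedBall 0 s) := by
    apply ContinuousOn.mul
    · exact (hF.continuousOn.mono (Metric.closedBall_subset_ball hs1)).norm
    · exact ((continuous_const.sub continuous_norm).rpow_const (fun _ => Or.inr ha.le)).continuousOn
  obtain ⟨w, hw, hmax⟩ := (isCompact_closedBall (0 : ℂ) s).exists_isMaxOn
    ⟨0, by simp [hs.le]⟩ hcont
  have hws : ‖w‖ ≤ s := by simpa using hw
  refine le_trans (hmax (a := z) (by simpa using hz)) ?_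
  have hR0 : 0 ≤ ((2 : ℝ) ^ (1/p)) ^ (1/p) * Q := by positivity
  change ‖F w‖ * (s - ‖w‖) ^ (1/p) ≤ _
  rcases hws.eq_or_lt with heq | hlt
  · rw [heq, sub_self, Real.zero_rpow ha.ne', mul_zero]; exact hR0
  rcases (norm_nonneg (F w)).eq_or_lt with h0 | hf
  · rw [← h0, zero_mul]; exact hR0
  set f := ‖F w‖ with hfdef
  set d := s - ‖w‖ with hd
  have hdpos : 0 < d := by simp [hd, hlt]
  set R := (s + ‖w‖) / 2 with hRdef
  have hwR : ‖w‖ < R := by rw [hRdef]; linarith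
  have hRs : R < s := by rw [hRdef]; linarith
  have hR : 0 ≤ R := by rw [hRdef]; positivity
  have hR1 : R < 1 := hRs.trans hs1
  have hb : ∀ t, ‖F (circlePt R t)‖ ≤ (2 : ℝ) ^ (1/p) * f := by
    intro t
    have h1 := hmax (a := circlePt R t) (by simpa [norm_circlePt hR] using hRs.le)
    change ‖F (circlePt R t)‖ * (s - ‖circlePt R t‖) ^ (1/p) ≤ f * d ^ (1/p) at h1
    rw [norm_circlePt hR, show s - R = d / 2 by rw [hRdef, hd]; ring,
      Real.div_rpow hdpos.le (by norm_num)] at h1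
    have hd' : 0 < d ^ (1/p) := by positivity
    have h2' : (0:ℝ) < 2 ^ (1/p) := by positivity
    rw [mul_div_assoc', div_le_iff₀ h2'] at h1
    nlinarith
  have hc := continuous_comp_circlePt hF hR hR1
  have hc2 : Continuous (fun t => ‖F (circlePt R t)‖ ^ p) :=
    hc.norm.rpow_const (fun _ => Or.inr hp.le)
  have hI : ∫ t in I₀, ‖F (circlePt R t)‖ ≤ ((2 : ℝ) ^ (1/p) * f) ^ (1 - p) * Q ^ p := by
    calc ∫ t in I₀, ‖F (circlePt R t)‖
        ≤ ∫ t in I₀, ((2 : ℝ) ^ (1/p) * f) ^ (1 - p) * ‖F (circlePt R t)‖ ^ p := by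
          apply integral_mono (integrableOn_I₀ hc.norm)
            (integrableOn_I₀ (continuous_const.mul hc2))
          intro t
          change ‖F (circlePt R t)‖ ≤ ((2 : ℝ) ^ (1/p) * f) ^ (1 - p) * ‖F (circlePt R t)‖ ^ p
          rcases (norm_nonneg (F (circlePt R t))).eq_or_lt with h0 | hpos
          · rw [← h0]; positivity
          · calc ‖F (circlePt R t)‖ = ‖F (circlePt R t)‖ ^ (1 - p) * ‖F (circlePt R t)‖ ^ p := by
                  rw [← Real.rpow_add hpos]; simp
              _ ≤ _ := by
                  gcongr
                  exact hb t
      _ ≤ _ := by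
          rw [integral_const_mul]
          gcongr
          exact mean_p hp hQ hF hR hR1 (h R hR hR1)
  have hC := cauchy_bound hF hR1 hwR
  rw [← hfdef] at hC
  have hRd : R - ‖w‖ = d / 2 := by rw [hRdef, hd]; ring
  have hC2 : f ≤ 2 / d * (((2 : ℝ) ^ (1/p) * f) ^ (1 - p) * Q ^ p) := by
    refine hC.trans ?_
    rw [hRd]
    have : R / (d / 2) ≤ 2 / d := by
      rw [div_le_div_iff₀ (by positivity) hdpos]; nlinarith
    have h0 : 0 ≤ ∫ t in I₀, ‖F (circlePt R t)‖ := integral_nonneg fun _ => norm_nonneg _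
    gcongr
  have hfp : f ^ p ≤ 2 ^ (1/p) / d * Q ^ p := by
    have e1 : f = f ^ (1 - p) * f ^ p := by rw [← Real.rpow_add hf]; simp
    have e2 : ((2 : ℝ) ^ (1/p) * f) ^ (1 - p) = 2 ^ (1/p) / 2 * f ^ (1 - p) := by
      rw [Real.mul_rpow (by positivity) hf.le, ← Real.rpow_mul (by norm_num)]
      congr 1
      rw [show 1 / p * (1 - p) = 1/p - 1 by field_simp, Real.rpow_sub (by norm_num), Real.rpow_one]
    rw [e2] at hC2
    have hpos : 0 < f ^ (1 - p) := by positivity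
    refine le_of_mul_le_mul_left ?_ hpos
    rw [← e1]
    refine hC2.trans (le_of_eq ?_)
    field_simp
  have hfin : (f ^ p * d) ^ (1/p) ≤ (2 ^ (1/p) * Q ^ p) ^ (1/p) := by
    apply Real.rpow_le_rpow (by positivity) _ ha.le
    calc f ^ p * d ≤ 2 ^ (1/p) / d * Q ^ p * d := by gcongr
      _ = _ := by field_simp
  rw [Real.mul_rpow (by positivity) hdpos.le, Real.mul_rpow (by positivity) (by positivity),
    ← Real.rpow_mul hf.le, ← Real.rpow_mul hQ, mul_one_div_cancel hp.ne', Real.rpow_one,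
    Real.rpow_one] at hfin
  exact hfin

lemma growth {p : ℝ} (hp : 0 < p) (hp1 : p ≤ 1) :
    ∃ (K : ℝ) (N : ℕ), 0 ≤ K ∧ ∀ {X : Type*} [NormedAddCommGroup X] [NormedSpace ℂ X]
      [CompleteSpace X] (Q : ℝ) (_ : 0 ≤ Q) (F : ℂ → X)
      (_ : DifferentiableOn ℂ F (Metric.ball 0 1))
      (_ : ∀ r : ℝ, 0 ≤ r → r < 1 → hpIntegral p F r ≤ ENNReal.ofReal (Q ^ p)) (z : ℂ),
      ‖z‖ < 1 → ‖F z‖ * (1 - ‖z‖) ^ N ≤ K * Q := by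
  obtain ⟨N, hN⟩ := exists_nat_ge (1/p)
  refine ⟨2 ^ N * ((2 : ℝ) ^ (1/p)) ^ (1/p), N, by positivity, ?_⟩
  intro X _ _ _ Q hQ F hF h z hz
  have hz0 := norm_nonneg z
  have h1 := growth_aux hp hp1 hQ hF h (s := (1 + ‖z‖)/2) (by positivity) (by linarith) (z := z)
    (by linarith)
  rw [show (1 + ‖z‖) / 2 - ‖z‖ = (1 - ‖z‖) / 2 by ring] at h1
  have h2 : ((1 - ‖z‖) / 2) ^ N ≤ ((1 - ‖z‖) / 2) ^ (1/p) := by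
    rw [← Real.rpow_natCast]
    exact Real.rpow_le_rpow_of_exponent_ge (by linarith) (by linarith) hN
  calc ‖F z‖ * (1 - ‖z‖) ^ N = 2 ^ N * (‖F z‖ * ((1 - ‖z‖) / 2) ^ N) := by
        rw [div_pow]; field_simp
    _ ≤ 2 ^ N * (‖F z‖ * ((1 - ‖z‖) / 2) ^ (1/p)) := by gcongr
    _ ≤ 2 ^ N * (((2 : ℝ) ^ (1/p)) ^ (1/p) * Q) := by gcongr
    _ = _ := by ring

lemma circlePt_one_period (t : ℝ) : circlePt 1 (t + 1) = circlePt 1 t := by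
  rw [circlePt_eq, circlePt_eq, mul_add, mul_one]
  exact periodic_circleMap 0 1 _

lemma circlePt_mul (s t : ℝ) : circlePt s t = s * circlePt 1 t := by
  simp [circlePt]

lemma smooth_deriv {g : ℝ → ℂ} (hg : Smooth1PeriodicC g) : Smooth1PeriodicC (deriv g) := by
  refine ⟨?_, fun t => ?_⟩
  · have h := (contDiff_infty_iff_deriv (𝕜 := ℝ) (f := g)).1 hg.1
    exact h.2
  · rw [← deriv_comp_add_const]
    congr 1
    ext x
    exact hg.2 x

lemma smooth_iteratedDeriv {g : ℝ → ℂ} (hg : Smooth1PeriodicC g) (i : ℕ) :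
    Smooth1PeriodicC (iteratedDeriv i g) := by
  induction i with
  | zero => simpa using hg
  | succ n ih => rw [iteratedDeriv_succ]; exact smooth_deriv ih

lemma le_testSeminorm {g : ℝ → ℂ} (hg : Smooth1PeriodicC g) (i : ℕ) (t : ℝ) :
    ‖iteratedDeriv i g t‖ ≤ testSeminormC i g := by
  have h := smooth_iteratedDeriv hg i
  have hc : Continuous (iteratedDeriv i g) := h.1.continuous
  have hper : Function.Periodic (iteratedDeriv i g) 1 := h.2
  have h1 : iteratedDeriv i g t = iteratedDeriv i g (Int.fract t) := by
    rw [Int.fract]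
    have := hper.sub_zsmul_eq (x := t) ⌊t⌋
    simpa using this.symm
  rw [h1]
  have hb : BddAbove (Set.range fun t : Set.Icc (0 : ℝ) 1 => ‖iteratedDeriv i g t‖) := by
    have := (isCompact_Icc (a := (0 : ℝ)) (b := 1)).bddAbove_image (f := fun t => ‖iteratedDeriv i g t‖)
      hc.norm.continuousOn
    rwa [Set.image_eq_range] at this
  exact le_ciSup hb (⟨Int.fract t, Int.fract_nonneg t, (Int.fract_lt_one t).le⟩ : Set.Icc (0 : ℝ) 1)

lemma testSeminorm_nonneg (i : ℕ) (g : ℝ → ℂ) : 0 ≤ testSeminormC i g :=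
  Real.iSup_nonneg fun _ => norm_nonneg _

def fcoef (g : ℝ → ℂ) (n : ℕ) : ℂ := ∫ t in I₀, g t * circlePt 1 t ^ n

lemma fcoef_bound {g : ℝ → ℂ} {B : ℝ} (hB : ∀ t, ‖g t‖ ≤ B) (n : ℕ) : ‖fcoef g n‖ ≤ B := by
  have := norm_setIntegral_le_of_norm_le_const (μ := volume) (s := I₀)
    (f := fun t => g t * circlePt 1 t ^ n) (C := B) (by simp [I₀])
    (fun t _ => by simpa [norm_circlePt] using hB t)
  have hv : volume.real I₀ = 1 := by simp [I₀, Measure.real]; norm_num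
  rw [hv, mul_one] at this
  exact this

lemma hasDerivAt_circlePt_pow (n : ℕ) (t : ℝ) :
    HasDerivAt (fun t => circlePt 1 t ^ n) (2 * Real.pi * Complex.I * n * circlePt 1 t ^ n) t := by
  have h0 : HasDerivAt (fun t : ℝ => (t : ℂ)) 1 t := Complex.ofRealCLM.hasDerivAt
  have h1 : HasDerivAt (fun t : ℝ => (2 * Real.pi * n * Complex.I : ℂ) * (t : ℂ))
      (2 * Real.pi * n * Complex.I) t := by simpa using h0.const_mul (2 * Real.pi * n * Complex.I : ℂ)
  have h2 := h1.cexp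
  have e : ∀ t, circlePt 1 t ^ n = Complex.exp ((2 * Real.pi * n * Complex.I : ℂ) * (t : ℂ)) := by
    intro t
    rw [circlePt, Complex.ofReal_one, one_mul, ← Complex.exp_nat_mul]
    congr 1; ring
  simp only [e]
  convert h2 using 1
  ring

lemma fcoef_deriv {g : ℝ → ℂ} (hg : Smooth1PeriodicC g) (n : ℕ) :
    (n : ℝ) * ‖fcoef g n‖ ≤ ‖fcoef (deriv g) n‖ := by
  have hdg := smooth_deriv hg
  have hd : Differentiable ℝ g := hg.1.differentiable (by simp)
  have hcp : Continuous fun t => circlePt 1 t ^ n := (continuous_circlePt 1).pow n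
  have h := intervalIntegral.integral_mul_deriv_eq_deriv_mul (a := -(1 : ℝ)/2) (b := 1/2)
    (u := g) (u' := deriv g) (v := fun t => circlePt 1 t ^ n)
    (v' := fun t => 2 * Real.pi * Complex.I * n * circlePt 1 t ^ n)
    (fun x _ => (hd x).hasDerivAt) (fun x _ => hasDerivAt_circlePt_pow n x)
    (hdg.1.continuous.intervalIntegrable _ _)
    ((continuous_const.mul hcp).intervalIntegrable _ _)
  have e1 : g (1/2) = g (-(1 : ℝ)/2) := by rw [← hg.2 (-(1 : ℝ)/2)]; norm_num
  have e2 : circlePt 1 (1/2) = circlePt 1 (-(1 : ℝ)/2) := by rw [← circlePt_one_period (-(1 : ℝ)/2)]; norm_num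
  simp only [e1, e2, sub_self, zero_sub] at h
  have h3 : 2 * Real.pi * Complex.I * n * fcoef g n = - fcoef (deriv g) n := by
    unfold fcoef
    rw [integral_I₀, integral_I₀, ← h, ← intervalIntegral.integral_const_mul]
    congr 1
    ext t; ring
  have h4 := congrArg norm h3
  rw [norm_neg] at h4
  rw [← h4]
  simp only [norm_mul, Complex.norm_I, Complex.norm_natCast, Complex.norm_real, Complex.norm_two,
    mul_one, Real.norm_eq_abs, abs_of_pos Real.pi_pos]
  have := Real.two_le_pi
  have h5 : 0 ≤ (n : ℝ) * ‖fcoef g n‖ := by positivity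
  nlinarith

lemma fcoef_iter {g : ℝ → ℂ} (hg : Smooth1PeriodicC g) (n k : ℕ) :
    (n : ℝ) ^ k * ‖fcoef g n‖ ≤ testSeminormC k g := by
  have h : (n : ℝ) ^ k * ‖fcoef g n‖ ≤ ‖fcoef (iteratedDeriv k g) n‖ := by
    induction k with
    | zero => simp
    | succ k ih =>
      rw [iteratedDeriv_succ]
      refine le_trans ?_ (fcoef_deriv (smooth_iteratedDeriv hg k) n)
      rw [pow_succ, mul_comm ((n : ℝ) ^ k), mul_assoc]
      gcongr
  exact h.trans (fcoef_bound (le_testSeminorm hg k) n)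

lemma fcoef_decay {g : ℝ → ℂ} (hg : Smooth1PeriodicC g) (n k : ℕ) :
    ((n : ℝ) + 1) ^ k * ‖fcoef g n‖ ≤ 2 ^ k * ∑ i ∈ Finset.range (k + 1), testSeminormC i g := by
  rcases Nat.eq_zero_or_pos n with rfl | hn
  · have h1 := fcoef_iter hg 0 0
    have h2 : testSeminormC 0 g ≤ ∑ i ∈ Finset.range (k + 1), testSeminormC i g :=
      Finset.single_le_sum (f := fun i => testSeminormC i g)
        (fun i _ => testSeminorm_nonneg i g) (by simp)
    have h3 : (1 : ℝ) ≤ 2 ^ k := one_le_pow₀ (by norm_num)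
    have h4 := testSeminorm_nonneg 0 g
    simp at h1 ⊢
    nlinarith
  · have h1 := fcoef_iter hg n k
    have h2 : testSeminormC k g ≤ ∑ i ∈ Finset.range (k + 1), testSeminormC i g :=
      Finset.single_le_sum (f := fun i => testSeminormC i g)
        (fun i _ => testSeminorm_nonneg i g) (by simp)
    have hn1 : (1 : ℝ) ≤ n := by exact_mod_cast hn
    calc ((n : ℝ) + 1) ^ k * ‖fcoef g n‖ ≤ (2 * n) ^ k * ‖fcoef g n‖ := by
          gcongr; linarith
      _ = 2 ^ k * ((n : ℝ) ^ k * ‖fcoef g n‖) := by rw [mul_pow]; ring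
      _ ≤ _ := by gcongr; exact h1.trans h2

def tcoef {X : Type*} [NormedAddCommGroup X] [NormedSpace ℂ X] (F : ℂ → X) (n : ℕ) : X :=
  (n.factorial : ℂ)⁻¹ • iteratedDeriv n F 0

lemma tcoef_bound {X : Type*} [NormedAddCommGroup X] [NormedSpace ℂ X] [CompleteSpace X]
    {F : ℂ → X} (hF : DifferentiableOn ℂ F (Metric.ball 0 1)) {M : ℝ} {N : ℕ}
    (h : ∀ z : ℂ, ‖z‖ < 1 → ‖F z‖ * (1 - ‖z‖) ^ N ≤ M) (n : ℕ) :
    ‖tcoef F n‖ ≤ Real.exp 1 * 2 ^ N * M * ((n : ℝ) + 1) ^ N := by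
  have hM : 0 ≤ M := by
    have := h 0 (by simp)
    simp at this
    exact (norm_nonneg _).trans this
  set r : ℝ := ((n : ℝ) + 1) / (n + 2) with hr
  have hr0 : 0 < r := by positivity
  have hr1 : r < 1 := by rw [hr, div_lt_one (by positivity)]; linarith
  have h1r : 1 - r = 1 / ((n : ℝ) + 2) := by rw [hr]; field_simp; ring
  have hcl : DiffContOnCl ℂ F (Metric.ball 0 r) :=
    DifferentiableOn.diffContOnCl_ball (U := Metric.ball 0 1) hF (Metric.closedBall_subset_ball hr1)
  have hb := Complex.norm_iteratedDeriv_le_of_forall_mem_sphere_norm_le n hr0 hcl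
    (C := M * ((n : ℝ) + 2) ^ N) (by
      intro z hz
      have hz' : ‖z‖ = r := by simpa using hz
      have := h z (by rw [hz']; exact hr1)
      rw [hz', h1r, one_div, inv_pow] at this
      rwa [← div_eq_mul_inv, div_le_iff₀ (by positivity)] at this)
  have hrn : (r ^ n)⁻¹ ≤ Real.exp 1 := by
    have h1 : r⁻¹ ≤ Real.exp (1 / ((n : ℝ) + 1)) := by
      have : r⁻¹ = 1 / ((n : ℝ) + 1) + 1 := by rw [hr]; field_simp; ring
      rw [this]; exact Real.add_one_le_exp _
    calc (r ^ n)⁻¹ = (r⁻¹) ^ n := by rw [inv_pow]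
      _ ≤ Real.exp (1 / ((n : ℝ) + 1)) ^ n := by gcongr
      _ = Real.exp (n * (1 / ((n : ℝ) + 1))) := by rw [← Real.exp_nat_mul]
      _ ≤ Real.exp 1 := by
        apply Real.exp_le_exp.2
        rw [mul_one_div, div_le_one (by positivity)]; linarith
  unfold tcoef
  rw [norm_smul, norm_inv, Complex.norm_natCast]
  have hfac : (0 : ℝ) < n.factorial := by positivity
  calc (n.factorial : ℝ)⁻¹ * ‖iteratedDeriv n F 0‖
      ≤ (n.factorial : ℝ)⁻¹ * (n.factorial * (M * ((n : ℝ) + 2) ^ N) / r ^ n) := by gcongr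
    _ = (r ^ n)⁻¹ * (M * ((n : ℝ) + 2) ^ N) := by field_simp
    _ ≤ Real.exp 1 * (M * (2 * ((n : ℝ) + 1)) ^ N) := by gcongr; linarith
    _ = _ := by rw [mul_pow]; ring

lemma summable_inv_sq : Summable (fun n : ℕ => 1 / ((n : ℝ) + 1) ^ 2) := by
  have := (summable_nat_add_iff (f := fun n : ℕ => 1 / (n : ℝ) ^ 2) 1).2
    (Real.summable_one_div_nat_pow.2 (by norm_num))
  simpa using this

lemma pairing_hasSum {X : Type*} [NormedAddCommGroup X] [NormedSpace ℂ X] [CompleteSpace X]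
    {F : ℂ → X} (hF : DifferentiableOn ℂ F (Metric.ball 0 1)) {M : ℝ} {N : ℕ}
    (h : ∀ n : ℕ, ‖tcoef F n‖ ≤ M * ((n : ℝ) + 1) ^ N)
    {g : ℝ → ℂ} (hg : Smooth1PeriodicC g) {s : ℝ} (hs : 0 < s) (hs1 : s < 1) :
    HasSum (fun n => ((s : ℂ) ^ n * fcoef g n) • tcoef F n)
      (∫ t in I₀, g t • F (circlePt s t)) := by
  have hsum : Summable (fun n : ℕ => s ^ n * (M * ((n : ℝ) + 1) ^ N)) := by
    have h1 := (summable_nat_add_iff (f := fun n : ℕ => (n : ℝ) ^ N * s ^ n) 1).2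
      (summable_pow_mul_geometric_of_norm_lt_one N (by rwa [Real.norm_eq_abs, abs_of_pos hs]))
    have h2 := h1.mul_left (M / s)
    refine h2.congr fun n => ?_
    push_cast
    rw [pow_succ]
    field_simp
  have hcp : ∀ n, Continuous fun t => circlePt 1 t ^ n := fun n => (continuous_circlePt 1).pow n
  have hgc := hg.1.continuous
  have key := hasSum_integral_of_dominated_convergence (μ := volume.restrict I₀)
    (F := fun (n : ℕ) t => ((s : ℂ) ^ n * (g t * circlePt 1 t ^ n)) • tcoef F n)
    (f := fun t => g t • F (circlePt s t))
    (fun n _ => testSeminormC 0 g * (s ^ n * (M * ((n : ℝ) + 1) ^ N)))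
    (fun n => ((continuous_const.mul (hgc.mul (hcp n))).smul continuous_const).aestronglyMeasurable)
    (fun n => Eventually.of_forall fun t => by
      rw [norm_smul]
      have h1 : ‖g t‖ ≤ testSeminormC 0 g := by simpa using le_testSeminorm hg 0 t
      have h2 : ‖(s : ℂ) ^ n * (g t * circlePt 1 t ^ n)‖ = ‖g t‖ * s ^ n := by
        simp [norm_circlePt, abs_of_pos hs, mul_comm]
      rw [h2, mul_assoc]
      gcongr
      · exact testSeminorm_nonneg 0 g
      · exact h n)
    (Eventually.of_forall fun t => hsum.mul_left _)
    (integrableOn_I₀ continuous_const)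
    (Eventually.of_forall fun t => by
      have hz : circlePt s t ∈ Metric.ball (0 : ℂ) 1 := by simpa [norm_circlePt hs.le] using hs1
      have h1 := (Complex.hasSum_taylorSeries_on_ball hF hz).const_smul (g t)
      refine h1.congr_fun fun n => ?_
      rw [sub_zero, circlePt_mul s t, mul_pow, tcoef, smul_smul, smul_smul, smul_smul]
      congr 1
      ring)
  refine key.congr_fun fun n => ?_
  rw [integral_smul_const, integral_const_mul]
  rfl

lemma core {p : ℝ} (hp : 0 < p) (hp1 : p ≤ 1) :
    ∃ (k : ℕ) (C : ℝ), 0 ≤ C ∧ ∀ {X : Type*} [NormedAddCommGroup X] [NormedSpace ℂ X]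
      [CompleteSpace X] (Q : ℝ) (_ : 0 ≤ Q) (F : ℂ → X)
      (_ : DifferentiableOn ℂ F (Metric.ball 0 1))
      (_ : ∀ r : ℝ, 0 ≤ r → r < 1 → hpIntegral p F r ≤ ENNReal.ofReal (Q ^ p))
      (g : ℝ → ℂ) (_ : Smooth1PeriodicC g),
      ∃ L : X, Tendsto (fun s : ℝ => ∫ t in I₀, g t • F (circlePt s t))
          (nhdsWithin 1 (Set.Iio 1)) (nhds L) ∧
        ‖L‖ ≤ C * Q * ∑ i ∈ Finset.range (k + 1), testSeminormC i g := by
  obtain ⟨K, N, hK, hgrow⟩ := growth hp hp1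
  set T : ℝ := ∑' n : ℕ, 1 / ((n : ℝ) + 1) ^ 2 with hT
  have hT0 : 0 ≤ T := tsum_nonneg fun n => by positivity
  refine ⟨N + 2, (Real.exp 1 * 2 ^ N * K) * 2 ^ (N + 2) * T, by positivity, ?_⟩
  intro X _ _ _ Q hQ F hF h g hg
  set S := ∑ i ∈ Finset.range (N + 2 + 1), testSeminormC i g with hS
  have hS0 : 0 ≤ S := Finset.sum_nonneg fun i _ => testSeminorm_nonneg i g
  have htc := tcoef_bound hF (hgrow Q hQ F hF h)
  set A : ℝ := Real.exp 1 * 2 ^ N * (K * Q) with hA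
  have hA0 : 0 ≤ A := by positivity
  have hterm : ∀ n : ℕ, ‖fcoef g n • tcoef F n‖ ≤ A * (2 ^ (N + 2) * S) * (1 / ((n : ℝ) + 1) ^ 2) := by
    intro n
    have h1 := fcoef_decay hg n (N + 2)
    rw [norm_smul, mul_one_div, le_div_iff₀ (by positivity)]
    calc ‖fcoef g n‖ * ‖tcoef F n‖ * ((n : ℝ) + 1) ^ 2
        ≤ ‖fcoef g n‖ * (A * ((n : ℝ) + 1) ^ N) * ((n : ℝ) + 1) ^ 2 := by
          gcongr; exact htc n
      _ = A * (((n : ℝ) + 1) ^ (N + 2) * ‖fcoef g n‖) := by ring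
      _ ≤ A * (2 ^ (N + 2) * S) := by gcongr
  have hbs : Summable (fun n : ℕ => A * (2 ^ (N + 2) * S) * (1 / ((n : ℝ) + 1) ^ 2)) :=
    summable_inv_sq.mul_left _
  refine ⟨∑' n, fcoef g n • tcoef F n, ?_, ?_⟩
  · have ht : Tendsto (fun s : ℝ => ∑' n, ((s : ℂ) ^ n * fcoef g n) • tcoef F n)
        (nhdsWithin 1 (Set.Iio 1)) (nhds (∑' n, fcoef g n • tcoef F n)) := by
      apply tendsto_tsum_of_dominated_convergence hbs
      · intro n
        have hc : Continuous (fun s : ℝ => ((s : ℂ) ^ n * fcoef g n) • tcoef F n) := by fun_prop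
        have := (hc.tendsto 1).mono_left (nhdsWithin_le_nhds (s := Set.Iio 1))
        simpa using this
      · filter_upwards [Ioo_mem_nhdsLT (show (0 : ℝ) < 1 by norm_num)] with s hs n
        refine le_trans ?_ (hterm n)
        rw [norm_smul, norm_smul, norm_mul, norm_pow, Complex.norm_real, Real.norm_eq_abs,
          abs_of_pos hs.1]
        have : s ^ n ≤ 1 := pow_le_one₀ hs.1.le hs.2.le
        gcongr
        exact mul_le_of_le_one_left (norm_nonneg _) this
    refine ht.congr' ?_
    filter_upwards [Ioo_mem_nhdsLT (show (0 : ℝ) < 1 by norm_num)] with s hs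
    exact (pairing_hasSum hF htc hg hs.1 hs.2).tsum_eq
  · refine (tsum_of_norm_bounded hbs.hasSum hterm).trans (le_of_eq ?_)
    rw [tsum_mul_left, ← hT, hA]
    ring

open Classical in
def Gam {X : Type*} [NormedAddCommGroup X] (Φ : (ℂ → X) → (ℝ → ℂ) → ℝ → X)
    (F : ℂ → X) (g : ℝ → ℂ) : X :=
  if Smooth1PeriodicC g then
    @limUnder X _ ℝ ⟨0⟩ (nhdsWithin 1 (Set.Iio 1)) (Φ F g) else 0

lemma mem_Q {X : Type*} [NormedAddCommGroup X] [NormedSpace ℂ X] {p : ℝ} (hp : 0 < p)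
    {F : ℂ → X} (hF : memHpD p F) :
    qHpD p F < ⊤ ∧ ∀ r : ℝ, 0 ≤ r → r < 1 →
      hpIntegral p F r ≤ ENNReal.ofReal ((qHpD p F).toReal ^ p) := by
  obtain ⟨_, B, hB, hFB⟩ := hF
  have hlt : qHpD p F < ⊤ := by
    refine lt_of_le_of_lt (iSup_le fun r => ?_) (ENNReal.rpow_lt_top_of_nonneg
      (by positivity : 0 ≤ 1/p) hB.ne)
    exact ENNReal.rpow_le_rpow (hFB r.1 r.2.1 r.2.2) (by positivity)
  refine ⟨hlt, fun r hr hr1 => ?_⟩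
  rw [← ENNReal.ofReal_rpow_of_nonneg ENNReal.toReal_nonneg hp.le, ENNReal.ofReal_toReal hlt.ne]
  have h1 : (hpIntegral p F r) ^ (1/p) ≤ qHpD p F :=
    le_iSup (fun r : Set.Ico (0 : ℝ) 1 => (hpIntegral p F r.1) ^ (1/p)) ⟨r, hr, hr1⟩
  have h2 := ENNReal.rpow_le_rpow h1 hp.le
  rwa [← ENNReal.rpow_mul, one_div_mul_cancel hp.ne', ENNReal.rpow_one] at h2

lemma pairing_integrable {X : Type*} [NormedAddCommGroup X] [NormedSpace ℂ X] {F : ℂ → X}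
    (hF : DifferentiableOn ℂ F (Metric.ball 0 1)) {g : ℝ → ℂ} (hg : Smooth1PeriodicC g)
    {s : ℝ} (hs : s ∈ Set.Ioo (0 : ℝ) 1) :
    Integrable (fun t => g t • F (circlePt s t)) (volume.restrict I₀) :=
  integrableOn_I₀ (hg.1.continuous.smul (continuous_comp_circlePt hF hs.1.le hs.2))

lemma smooth_add {g h : ℝ → ℂ} (hg : Smooth1PeriodicC g) (hh : Smooth1PeriodicC h) :
    Smooth1PeriodicC (g + h) :=
  ⟨hg.1.add hh.1, fun t => by simp [hg.2 t, hh.2 t]⟩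

lemma smooth_smul {g : ℝ → ℂ} (c : ℂ) (hg : Smooth1PeriodicC g) :
    Smooth1PeriodicC (c • g) :=
  ⟨contDiff_const.smul hg.1, fun t => by simp [hg.2 t]⟩

theorem boundary_distribution_exists {X : Type*} [NormedAddCommGroup X]
    [NormedSpace ℂ X] [CompleteSpace X] (p : ℝ) (hp : 0 < p) (hp1 : p ≤ 1) :
    ∃ Γ : (ℂ → X) → ((ℝ → ℂ) → X),
      (∀ F, memHpD p F → ∀ g : ℝ → ℂ, Smooth1PeriodicC g →
        Tendsto (fun s : ℝ => ∫ t in I₀, g t • F (circlePt s t))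
          (nhdsWithin 1 (Set.Iio 1)) (nhds (Γ F g))) ∧
      (∀ F, memHpD p F → IsPeriodicDistributionC (Γ F)) ∧
      (∀ F G, memHpD p F → memHpD p G → Γ (F + G) = Γ F + Γ G) ∧
      (∀ (c : ℂ) (F), memHpD p F → Γ (c • F) = c • Γ F) ∧
      ∃ (k : ℕ) (C : ℝ≥0∞), C < ⊤ ∧ ∀ F g, memHpD p F → Smooth1PeriodicC g →
        (‖Γ F g‖₊ : ℝ≥0∞) ≤
          C * qHpD p F * ENNReal.ofReal (∑ i ∈ Finset.range (k + 1), testSeminormC i g) := by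
  obtain ⟨k, C, hC, hcore⟩ := core hp hp1
  let Φ : (ℂ → X) → (ℝ → ℂ) → ℝ → X := fun F g s => ∫ t in I₀, g t • F (circlePt s t)
  have hmem : Set.Ioo (0 : ℝ) 1 ∈ nhdsWithin (1 : ℝ) (Set.Iio 1) :=
    Ioo_mem_nhdsLT (show (0 : ℝ) < 1 by norm_num)
  have hval : ∀ F g (L : X), Smooth1PeriodicC g →
      Tendsto (Φ F g) (nhdsWithin 1 (Set.Iio 1)) (nhds L) → Gam Φ F g = L := by
    intro F g L hg hL
    unfold Gam
    rw [if_pos hg]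
    exact hL.limUnder_eq
  have hzero : ∀ F g, ¬ Smooth1PeriodicC g → Gam Φ F g = 0 := by
    intro F g hg
    unfold Gam
    rw [if_neg hg]
  have hmain : ∀ F g, memHpD p F → Smooth1PeriodicC g →
      Tendsto (Φ F g) (nhdsWithin 1 (Set.Iio 1)) (nhds (Gam Φ F g)) ∧
      ‖Gam Φ F g‖ ≤ C * (qHpD p F).toReal * ∑ i ∈ Finset.range (k + 1), testSeminormC i g := by
    intro F g hF hg
    obtain ⟨L, hL, hLb⟩ := hcore (qHpD p F).toReal ENNReal.toReal_nonneg F hF.1 (mem_Q hp hF).2 g hg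
    rw [hval F g L hg hL]
    exact ⟨hL, hLb⟩
  refine ⟨Gam Φ, fun F hF g hg => (hmain F g hF hg).1, fun F hF => ⟨?_, ?_, ?_⟩, ?_, ?_,
    k, ENNReal.ofReal C, ENNReal.ofReal_lt_top, ?_⟩
  · intro g h hg hh
    refine hval F _ _ (smooth_add hg hh) ?_
    refine ((hmain F g hF hg).1.add (hmain F h hF hh).1).congr' ?_
    filter_upwards [hmem] with s hs
    change (∫ t in I₀, g t • F (circlePt s t)) + (∫ t in I₀, h t • F (circlePt s t))
      = ∫ t in I₀, (g + h) t • F (circlePt s t)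
    rw [← integral_add (pairing_integrable hF.1 hg hs) (pairing_integrable hF.1 hh hs)]
    simp [add_smul]
  · intro c g hg
    refine hval F _ _ (smooth_smul c hg) ?_
    refine ((hmain F g hF hg).1.const_smul c).congr fun s => ?_
    change c • (∫ t in I₀, g t • F (circlePt s t)) = ∫ t in I₀, (c • g) t • F (circlePt s t)
    rw [← integral_smul]
    simp [mul_smul]
  · exact ⟨k, C * (qHpD p F).toReal, fun g hg => (hmain F g hF hg).2⟩
  · intro F G hF hG
    funext g
    by_cases hg : Smooth1PeriodicC g
    · refine hval _ g _ hg ?_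
      refine ((hmain F g hF hg).1.add (hmain G g hG hg).1).congr' ?_
      filter_upwards [hmem] with s hs
      change (∫ t in I₀, g t • F (circlePt s t)) + (∫ t in I₀, g t • G (circlePt s t))
        = ∫ t in I₀, g t • (F + G) (circlePt s t)
      rw [← integral_add (pairing_integrable hF.1 hg hs) (pairing_integrable hG.1 hg hs)]
      simp
    · simp [hzero _ g hg]
  · intro c F hF
    funext g
    by_cases hg : Smooth1PeriodicC g
    · refine hval _ g _ hg ?_
      refine ((hmain F g hF hg).1.const_smul c).congr fun s => ?_
      change c • (∫ t in I₀, g t • F (circlePt s t)) = ∫ t in I₀, g t • (c • F) (circlePt s t)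
      rw [← integral_smul]
      simp [smul_comm c]
    · simp [hzero _ g hg]
  · intro F g hF hg
    have hb := (hmain F g hF hg).2
    have h1 := ENNReal.ofReal_le_ofReal hb
    rw [ofReal_norm, ENNReal.ofReal_mul (by positivity), ENNReal.ofReal_mul hC,
      ENNReal.ofReal_toReal (mem_Q hp hF).1.ne] at h1
    exact h1

end
end

section
/- Let X be a quasi-Banach space with a normalized unconditional basis X. Suppose X is power universal and permutatively equivalent to its square X². Then X has a unique unconditional basis, i.e., every normalized unconditional basis of X is permutatively equivalent to X. -/
/-!
Statement 16: Let `𝕏` be a quasi-Banach space with a normalized unconditional basis `X`.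
If `X` is power universal and permutatively equivalent to its square, then `𝕏` has a unique
unconditional basis: every normalized unconditional basis of `𝕏` is permutatively equivalent
to `X`.
-/

noncomputable section
open Filter Topology

/-- `q` is a quasi-norm making the real vector space `M` a quasi-Banach space. -/
structure IsQuasiBanach {M : Type*} [AddCommGroup M] [Module ℝ M] (q : M → ℝ) : Prop where
  q_nonneg : ∀ f, 0 ≤ q f
  q_pos : ∀ f, f ≠ 0 → 0 < q f
  q_smul : ∀ (c : ℝ) (f : M), q (c • f) = |c| * q f
  quasi_triangle : ∃ C : ℝ, 1 ≤ C ∧ ∀ f g, q (f + g) ≤ C * (q f + q g)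
  complete : ∀ F : ℕ → M,
    (∀ ε : ℝ, 0 < ε → ∃ N, ∀ m ≥ N, ∀ n ≥ N, q (F m - F n) < ε) →
    ∃ g, Tendsto (fun n => q (F n - g)) atTop (nhds 0)

/-- Unconditional convergence of `∑ n, v n` to `f` (convergence of the net of finite
partial sums). -/
def UncondSum {M ι : Type*} [AddCommGroup M] (q : M → ℝ) (v : ι → M) (f : M) : Prop :=
  ∀ ε : ℝ, 0 < ε → ∃ F : Finset ι, ∀ G : Finset ι, F ⊆ G → q ((∑ n ∈ G, v n) - f) < ε

/-- `x` is an unconditional basis of the whole space: every element has a unique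
unconditionally convergent expansion `∑ a_n x_n`. -/
def IsUncondBasis {M ι : Type*} [AddCommGroup M] [Module ℝ M] (q : M → ℝ) (x : ι → M) : Prop :=
  ∀ f : M, ∃! a : ι → ℝ, UncondSum q (fun n => a n • x n) f

/-- `x` is normalized. -/
def Normalized {M ι : Type*} (q : M → ℝ) (x : ι → M) : Prop := ∀ n, q (x n) = 1

/-- Two families indexed by the same set, possibly lying in different quasi-Banach spaces,
are `C`-equivalent: the correspondence of terms extends to an isomorphism of closed linear
spans, i.e. the quasi-norms of corresponding finitely supported linear combinations are
`C`-comparable. -/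
def EquivalentFamilies {M M' ι : Type*} [AddCommGroup M] [Module ℝ M]
    [AddCommGroup M'] [Module ℝ M'] (q : M → ℝ) (q' : M' → ℝ)
    (x : ι → M) (y : ι → M') (C : ℝ) : Prop :=
  ∀ a : ι →₀ ℝ,
    C⁻¹ * q (∑ n ∈ a.support, a n • x n) ≤ q' (∑ n ∈ a.support, a n • y n) ∧
    q' (∑ n ∈ a.support, a n • y n) ≤ C * q (∑ n ∈ a.support, a n • x n)

/-- Permutative equivalence (with some constant) of two families. -/
def PermutativelyEquivalent {M M' : Type*} {ι κ : Type*} [AddCommGroup M] [Module ℝ M]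
    [AddCommGroup M'] [Module ℝ M'] (q : M → ℝ) (q' : M' → ℝ)
    (x : ι → M) (y : κ → M') : Prop :=
  ∃ (π : ι ≃ κ) (C : ℝ), 0 < C ∧ EquivalentFamilies q q' x (fun n => y (π n)) C

/-- `f` lies in the closed linear span of the family `x`. -/
def InClosedSpan {M ι : Type*} [AddCommGroup M] [Module ℝ M] (q : M → ℝ)
    (x : ι → M) (f : M) : Prop :=
  ∀ ε : ℝ, 0 < ε → ∃ a : ι →₀ ℝ, q (f - ∑ n ∈ a.support, a n • x n) < ε

/-- `z` is an unconditional basic sequence: every element of its closed linear span has a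
unique unconditionally convergent expansion. -/
def IsUncondBasicSeq {M κ : Type*} [AddCommGroup M] [Module ℝ M] (q : M → ℝ)
    (z : κ → M) : Prop :=
  ∀ f, InClosedSpan q z f → ∃! a : κ → ℝ, UncondSum q (fun m => a m • z m) f

/-- `z` is `K`-complemented: there are bounded linear functionals `z*_m` biorthogonal to `z`
such that `‖∑_m a_m z*_m(f) z_m‖ ≤ K` whenever `|a_m| ≤ 1` for all `m` and `‖f‖ ≤ 1`. -/
def KComplemented {M κ : Type*} [AddCommGroup M] [Module ℝ M] (q : M → ℝ)
    (z : κ → M) (K : ℝ) : Prop :=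
  ∃ zs : κ → (M →ₗ[ℝ] ℝ),
    (∀ m, ∃ Cm : ℝ, ∀ f, |zs m f| ≤ Cm * q f) ∧
    (∀ m, zs m (z m) = 1) ∧ (∀ m m', m ≠ m' → zs m (z m') = 0) ∧
    (∀ a : κ → ℝ, (∀ m, |a m| ≤ 1) → ∀ f, q f ≤ 1 →
      ∀ F : Finset κ, q (∑ m ∈ F, (a m * zs m f) • z m) ≤ K)

/-- The quasi-norm of the `s`-fold product `M^s`. -/
def qPow {M : Type*} (q : M → ℝ) (s : ℕ) (f : Fin s → M) : ℝ := ⨆ i, q (f i)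

/-- The `s`-fold product of the subbasis of `x` given by `S`, an unconditional basis of
`M^s` indexed by `Fin s × S`. -/
def powerFamily {M ι : Type*} [AddCommGroup M] [Module ℝ M] (x : ι → M)
    (S : Set ι) (s : ℕ) : Fin s × S → (Fin s → M) :=
  fun p => Pi.single p.1 (x p.2.1)

/-- `x` is a power universal basis of `(M, q)`: for every subbasis `Y = (x_n)_{n∈S}` and every
`K`-complemented normalized unconditional basic sequence `Z` in the closed linear span of `Y`,
there are `s` and `C` depending only on `K` (and on `X`) such that `Z` is permutatively
`C`-equivalent to a subbasis of `Y^s`. -/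
def PowerUniversal {M ι : Type*} [AddCommGroup M] [Module ℝ M] (q : M → ℝ)
    (x : ι → M) : Prop :=
  ∀ K : ℝ, 0 < K → ∃ (s : ℕ) (C : ℝ), 0 < C ∧
    ∀ (S : Set ι) (κ : Type) (_ : Countable κ) (z : κ → M),
      (∀ m, InClosedSpan q (fun n : S => x n.1) (z m)) →
      IsUncondBasicSeq q z → Normalized q z → KComplemented q z K →
      ∃ (T : Set (Fin s × S)) (π : κ ≃ T),
        EquivalentFamilies q (qPow q s) z (fun m => powerFamily x S s (π m).1) C

section QB
variable {M : Type*} [AddCommGroup M] [Module ℝ M] {q : M → ℝ}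

/-- a quasi-triangle constant -/
def IsQuasiBanach.qC (hq : IsQuasiBanach q) : ℝ := hq.quasi_triangle.choose

lemma IsQuasiBanach.one_le (hq : IsQuasiBanach q) : 1 ≤ hq.qC := hq.quasi_triangle.choose_spec.1

lemma IsQuasiBanach.tri (hq : IsQuasiBanach q) (f g : M) : q (f + g) ≤ hq.qC * (q f + q g) :=
  hq.quasi_triangle.choose_spec.2 f g

lemma IsQuasiBanach.pos (hq : IsQuasiBanach q) : 0 < hq.qC := lt_of_lt_of_le one_pos hq.one_le

lemma IsQuasiBanach.zero (hq : IsQuasiBanach q) : q 0 = 0 := by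
  have := hq.q_smul 0 0
  simpa using this

lemma IsQuasiBanach.neg (hq : IsQuasiBanach q) (f : M) : q (-f) = q f := by
  have := hq.q_smul (-1) f
  simpa using this

lemma IsQuasiBanach.sub_comm (hq : IsQuasiBanach q) (f g : M) : q (f - g) = q (g - f) := by
  rw [← hq.neg, neg_sub]

lemma IsQuasiBanach.tri_sub (hq : IsQuasiBanach q) (f g : M) :
    q (f - g) ≤ hq.qC * (q f + q g) := by
  have := hq.tri f (-g)
  rwa [hq.neg, ← sub_eq_add_neg] at this

lemma IsQuasiBanach.tri3 (hq : IsQuasiBanach q) (f g h : M) :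
    q (f - h) ≤ hq.qC * (q (f - g) + q (g - h)) := by
  have := hq.tri (f - g) (g - h)
  rwa [sub_add_sub_cancel] at this

lemma IsQuasiBanach.sum_le (hq : IsQuasiBanach q) {α : Type*} (F : Finset α) (w : α → M) :
    q (∑ n ∈ F, w n) ≤ hq.qC ^ F.card * ∑ n ∈ F, q (w n) := by
  classical
  induction F using Finset.induction_on with
  | empty => simp [hq.zero]
  | insert a F ha ih =>
    rw [Finset.sum_insert ha, Finset.sum_insert ha, Finset.card_insert_of_notMem ha, pow_succ]
    have h1 := hq.tri (w a) (∑ n ∈ F, w n)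
    have h2 : (1 : ℝ) ≤ hq.qC ^ F.card := one_le_pow₀ hq.one_le
    have h3 := hq.q_nonneg (w a)
    have h4 : q (w a) ≤ hq.qC ^ F.card * q (w a) := le_mul_of_one_le_left h3 h2
    calc _ ≤ hq.qC * (q (w a) + q (∑ n ∈ F, w n)) := h1
      _ ≤ hq.qC * (hq.qC ^ F.card * q (w a) + hq.qC ^ F.card * ∑ n ∈ F, q (w n)) := by
        have := hq.pos
        gcongr
      _ = _ := by ring

lemma IsQuasiBanach.eq_zero (hq : IsQuasiBanach q) {f : M} (h : ∀ ε : ℝ, 0 < ε → q f ≤ ε) :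
    f = 0 := by
  by_contra hf
  have := hq.q_pos f hf
  have := h (q f / 2) (by linarith)
  linarith

lemma UncondSum.unique (hq : IsQuasiBanach q) {α : Type*} {v : α → M} {f g : M}
    (hf : UncondSum q v f) (hg : UncondSum q v g) : f = g := by
  classical
  rw [← sub_eq_zero]
  apply hq.eq_zero
  intro ε hε
  have hp := hq.pos
  obtain ⟨F, hF⟩ := hf (ε / (2 * hq.qC)) (by positivity)
  obtain ⟨G, hG⟩ := hg (ε / (2 * hq.qC)) (by positivity)
  have h1 := hF (F ∪ G) Finset.subset_union_left
  have h2 := hG (F ∪ G) Finset.subset_union_right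
  rw [hq.sub_comm] at h1
  calc _ ≤ _ := hq.tri3 f (∑ n ∈ F ∪ G, v n) g
    _ ≤ hq.qC * (ε / (2 * hq.qC) + ε / (2 * hq.qC)) := by gcongr
    _ = ε := by field_simp; ring

lemma UncondSum.add (hq : IsQuasiBanach q) {α : Type*} {v w : α → M} {f g : M}
    (hf : UncondSum q v f) (hg : UncondSum q w g) : UncondSum q (fun n => v n + w n) (f + g) := by
  classical
  intro ε hε
  have hp := hq.pos
  obtain ⟨F, hF⟩ := hf (ε / (2 * hq.qC)) (by positivity)
  obtain ⟨G, hG⟩ := hg (ε / (2 * hq.qC)) (by positivity)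
  refine ⟨F ∪ G, fun H hH => ?_⟩
  have h1 := hF H (Finset.subset_union_left.trans hH)
  have h2 := hG H (Finset.subset_union_right.trans hH)
  rw [Finset.sum_add_distrib, add_sub_add_comm]
  calc _ ≤ _ := hq.tri _ _
    _ < hq.qC * (ε / (2 * hq.qC) + ε / (2 * hq.qC)) := by gcongr
    _ = ε := by field_simp; ring

/-- image of an unconditional sum under a bounded linear map -/
lemma UncondSum.map (hq : IsQuasiBanach q) {α : Type*} {v : α → M} {f : M}
    (hf : UncondSum q v f) (L : M →ₗ[ℝ] M) {D : ℝ} (hL : ∀ g, q (L g) ≤ D * q g) :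
    UncondSum q (fun n => L (v n)) (L f) := by
  intro ε hε
  obtain ⟨F, hF⟩ := hf (ε / (|D| + 1)) (by positivity)
  refine ⟨F, fun G hG => ?_⟩
  rw [← map_sum, ← map_sub]
  have h1 := hF G hG
  have h0 := hq.q_nonneg ((∑ n ∈ G, v n) - f)
  have h2 : D ≤ |D| + 1 := by linarith [le_abs_self D]
  calc _ ≤ D * _ := hL _
    _ ≤ (|D| + 1) * q ((∑ n ∈ G, v n) - f) := by gcongr
    _ < (|D| + 1) * (ε / (|D| + 1)) := by gcongr
    _ = ε := by field_simp

lemma UncondSum.smul (hq : IsQuasiBanach q) {α : Type*} {v : α → M} {f : M} (c : ℝ)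
    (hf : UncondSum q v f) : UncondSum q (fun n => c • v n) (c • f) :=
  hf.map hq (LinearMap.lsmul ℝ M c) (D := |c|) (fun g => (hq.q_smul c g).le)

/-- coordinate functionals -/
def bcoord (hq : IsQuasiBanach q) {ι : Type*} {x : ι → M} (hb : IsUncondBasis q x) (n : ι) :
    M →ₗ[ℝ] ℝ where
  toFun f := (hb f).choose n
  map_add' f g := by
    have h := UncondSum.add hq (hb f).choose_spec.1 (hb g).choose_spec.1
    have := (hb (f + g)).choose_spec.2 (fun n => (hb f).choose n + (hb g).choose n)
      (by simpa only [add_smul] using h)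
    exact (congrFun this n).symm
  map_smul' c f := by
    have h := UncondSum.smul hq c (hb f).choose_spec.1
    have := (hb (c • f)).choose_spec.2 (fun n => c * (hb f).choose n)
      (by simpa only [smul_smul] using h)
    exact (congrFun this n).symm

lemma bcoord_sum (hq : IsQuasiBanach q) {ι : Type*} {x : ι → M} (hb : IsUncondBasis q x) (f : M) :
    UncondSum q (fun n => bcoord hq hb n f • x n) f := (hb f).choose_spec.1

lemma bcoord_unique (hq : IsQuasiBanach q) {ι : Type*} {x : ι → M} (hb : IsUncondBasis q x) {f : M}
    {a : ι → ℝ} (h : UncondSum q (fun n => a n • x n) f) (n : ι) : a n = bcoord hq hb n f :=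
  congrFun ((hb f).choose_spec.2 a h) n

lemma bcoord_finsum (hq : IsQuasiBanach q) {ι : Type*} {x : ι → M} (hb : IsUncondBasis q x)
    (F : Finset ι) (a : ι → ℝ) (n : ι) (hn : n ∈ F) :
    bcoord hq hb n (∑ m ∈ F, a m • x m) = a n := by
  classical
  have : UncondSum q (fun n => (if n ∈ F then a n else 0) • x n) (∑ m ∈ F, a m • x m) := by
    intro ε hε
    refine ⟨F, fun G hG => ?_⟩
    have : ∑ n ∈ G, (if n ∈ F then a n else 0) • x n = ∑ m ∈ F, a m • x m := by
      rw [← Finset.sum_subset hG]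
      · exact Finset.sum_congr rfl fun m hm => by simp [hm]
      · intro m _ hm
        simp [hm]
    rw [this, sub_self, hq.zero]
    exact hε
  rw [← bcoord_unique hq hb this n]
  simp [hn]

lemma bcoord_self (hq : IsQuasiBanach q) {ι : Type*} {x : ι → M} (hb : IsUncondBasis q x)
    (n : ι) : bcoord hq hb n (x n) = 1 := by
  have := bcoord_finsum hq hb {n} (fun _ => 1) n (by simp)
  simpa using this

lemma bcoord_ne (hq : IsQuasiBanach q) {ι : Type*} {x : ι → M} (hb : IsUncondBasis q x)
    (n m : ι) (h : n ≠ m) : bcoord hq hb n (x m) = 0 := by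
  classical
  have := bcoord_finsum hq hb {n, m} (fun k => if k = m then 1 else 0) n (by simp)
  rw [Finset.sum_pair h] at this
  simpa [h] using this

/-- unconditional Cauchy condition -/
def UCauchy (q : M → ℝ) {α : Type*} (v : α → M) : Prop :=
  ∀ ε : ℝ, 0 < ε → ∃ F : Finset α, ∀ G : Finset α, Disjoint F G → q (∑ n ∈ G, v n) < ε

lemma UncondSum.ucauchy (hq : IsQuasiBanach q) {α : Type*} {v : α → M} {f : M}
    (hf : UncondSum q v f) : UCauchy q v := by
  classical
  intro ε hε
  have hp := hq.pos
  obtain ⟨F, hF⟩ := hf (ε / (2 * hq.qC)) (by positivity)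
  refine ⟨F, fun G hG => ?_⟩
  have h1 := hF F subset_rfl
  have h2 := hF (F ∪ G) Finset.subset_union_left
  have e : ∑ n ∈ G, v n = (∑ n ∈ F ∪ G, v n - f) - (∑ n ∈ F, v n - f) := by
    rw [Finset.sum_union hG]; abel
  rw [e]
  calc _ ≤ _ := hq.tri_sub _ _
    _ < hq.qC * (ε / (2 * hq.qC) + ε / (2 * hq.qC)) := by gcongr
    _ = ε := by field_simp; ring

lemma UCauchy.exists_sum (hq : IsQuasiBanach q) {α : Type*} {v : α → M} (h : UCauchy q v) :
    ∃ f, UncondSum q v f := by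
  classical
  have hp := hq.pos
  choose F hF using fun k : ℕ => h (1 / ((k : ℝ) + 1)) (by positivity)
  let H : ℕ → Finset α := fun k => (Finset.range (k + 1)).biUnion F
  have hH : ∀ k, F k ⊆ H k := fun k => Finset.subset_biUnion_of_mem F (by simp)
  have hmono : Monotone H := fun a b hab => Finset.biUnion_subset_biUnion_of_subset_left _
    (Finset.range_mono (by omega))
  have key : ∀ k G, H k ⊆ G → q (∑ n ∈ G, v n - ∑ n ∈ H k, v n) < 1 / ((k : ℝ) + 1) := by
    intro k G hG
    rw [← Finset.sum_sdiff hG, add_sub_cancel_right]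
    apply hF
    exact Finset.disjoint_of_subset_left (hH k) Finset.disjoint_sdiff
  have small : ∀ ε : ℝ, 0 < ε → ∃ N : ℕ, ∀ n ≥ N, 1 / ((n : ℝ) + 1) < ε := by
    intro ε hε
    obtain ⟨N, hN⟩ := exists_nat_one_div_lt hε
    refine ⟨N, fun n hn => lt_of_le_of_lt ?_ hN⟩
    have : (N : ℝ) ≤ n := by exact_mod_cast hn
    gcongr
  obtain ⟨g, hg⟩ := hq.complete (fun k => ∑ n ∈ H k, v n) (by
    intro ε hε
    obtain ⟨N, hN⟩ := small (ε / (2 * hq.qC)) (by positivity)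
    refine ⟨N, fun m hm n hn => ?_⟩
    have h1 := (key N (H m) (hmono hm)).trans (hN N le_rfl)
    have h2 := (key N (H n) (hmono hn)).trans (hN N le_rfl)
    rw [hq.sub_comm] at h2
    calc _ ≤ _ := hq.tri3 _ (∑ n ∈ H N, v n) _
      _ < hq.qC * (ε / (2 * hq.qC) + ε / (2 * hq.qC)) := by gcongr
      _ = ε := by field_simp; ring)
  refine ⟨g, fun ε hε => ?_⟩
  have hε' : 0 < ε / (2 * hq.qC) := by positivity
  obtain ⟨N, hN⟩ := small (ε / (2 * hq.qC)) hε'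
  obtain ⟨k, hk, hk2⟩ := ((hg.eventually (gt_mem_nhds hε')).and (eventually_ge_atTop N)).exists
  refine ⟨H k, fun G hG => ?_⟩
  have h1 := (key k G hG).trans (hN k hk2)
  calc _ ≤ _ := hq.tri3 _ (∑ n ∈ H k, v n) _
      _ < hq.qC * (ε / (2 * hq.qC) + ε / (2 * hq.qC)) := by gcongr
      _ = ε := by field_simp; ring

lemma exists_pow_small {c : ℝ} (ε : ℝ) (hε : 0 < ε) : ∃ n : ℕ, c * (1 / 2 : ℝ) ^ n < ε := by
  have h : Tendsto (fun n : ℕ => c * (1 / 2 : ℝ) ^ n) atTop (𝓝 (c * 0)) :=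
    (tendsto_pow_atTop_nhds_zero_of_lt_one (by norm_num) (by norm_num)).const_mul c
  rw [mul_zero] at h
  exact (h.eventually (gt_mem_nhds hε)).exists

/-- Baire category -/
lemma IsQuasiBanach.baire (hq : IsQuasiBanach q) (B : ℕ → Set M) (hB : ∀ f, ∃ k, f ∈ B k) :
    ∃ k f₀, ∃ ε : ℝ, 0 < ε ∧ ∀ g, q (g - f₀) < ε → ∀ η : ℝ, 0 < η → ∃ b ∈ B k, q (g - b) < η := by
  by_contra hcon
  push Not at hcon
  choose G hG η hη hsep using hcon
  have hp := hq.pos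
  have h1 := hq.one_le
  let step : ℕ → M × {e : ℝ // 0 < e} → M × {e : ℝ // 0 < e} := fun k p =>
    (G k p.1 p.2.1 p.2.2, ⟨min (p.2.1 / (2 * hq.qC)) (η k p.1 p.2.1 p.2.2 / (4 * hq.qC ^ 2)), by
      have := p.2.2
      have := hη k p.1 p.2.1 p.2.2
      positivity⟩)
  let S : ℕ → M × {e : ℝ // 0 < e} := fun n => Nat.rec (0, ⟨1, one_pos⟩) (fun k p => step k p) n
  let f : ℕ → M := fun n => (S n).1
  let e : ℕ → ℝ := fun n => (S n).2.1
  have he : ∀ n, 0 < e n := fun n => (S n).2.2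
  have hf : ∀ n, q (f (n + 1) - f n) < e n := fun n => hG n (S n).1 (S n).2.1 (S n).2.2
  have he2 : ∀ n, e (n + 1) ≤ e n / (2 * hq.qC) := fun n => min_le_left _ _
  have hsep' : ∀ n, ∀ b ∈ B n, 4 * hq.qC ^ 2 * e (n + 1) ≤ q (f (n + 1) - b) := by
    intro n b hb
    have h2 : e (n + 1) ≤ η n (S n).1 (S n).2.1 (S n).2.2 / (4 * hq.qC ^ 2) := min_le_right _ _
    have h3 := hsep n (S n).1 (S n).2.1 (S n).2.2 b hb
    rw [le_div_iff₀ (by positivity)] at h2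
    calc _ = e (n + 1) * (4 * hq.qC ^ 2) := by ring
      _ ≤ _ := h2
      _ ≤ _ := h3
  have tail : ∀ d n, q (f (n + d) - f n) ≤ 2 * hq.qC * e n := by
    intro d
    induction d with
    | zero => intro n; have := he n; simp [hq.zero]; positivity
    | succ d ih =>
      intro n
      have i1 := ih (n + 1)
      have i2 := (hf n).le
      have i3 := he2 n
      rw [le_div_iff₀ (by positivity)] at i3
      have e1 : n + (d + 1) = n + 1 + d := by ring
      rw [e1]
      calc _ ≤ _ := hq.tri3 _ (f (n + 1)) _
        _ ≤ hq.qC * (e n + e n) := by gcongr; linarith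
        _ = _ := by ring
  have hehalf : ∀ n, e n ≤ (1 / 2 : ℝ) ^ n := by
    intro n
    induction n with
    | zero => simp [e, S]
    | succ n ih =>
      have i3 := he2 n
      have : e n / (2 * hq.qC) ≤ e n / 2 := by
        have := he n
        gcongr
        linarith
      rw [pow_succ]
      linarith
  obtain ⟨g, hg⟩ := hq.complete f (by
    intro ε hε
    obtain ⟨N, hN⟩ := exists_pow_small (c := 4 * hq.qC ^ 2) ε hε
    refine ⟨N, fun m hm n hn => ?_⟩
    obtain ⟨a, rfl⟩ := Nat.exists_eq_add_of_le hm
    obtain ⟨b, rfl⟩ := Nat.exists_eq_add_of_le hn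
    have i1 := tail a N
    have i2 := tail b N
    rw [hq.sub_comm] at i2
    refine lt_of_le_of_lt ?_ hN
    calc _ ≤ _ := hq.tri3 _ (f N) _
      _ ≤ hq.qC * (2 * hq.qC * e N + 2 * hq.qC * e N) := by gcongr
      _ = 4 * hq.qC ^ 2 * e N := by ring
      _ ≤ _ := by gcongr; exact hehalf N)
  obtain ⟨k, hk⟩ := hB g
  have i1 := hsep' k g hk
  have hpos : 0 < hq.qC * e (k + 1) := mul_pos hp (he (k + 1))
  obtain ⟨m, hm, hmk⟩ := ((hg.eventually (gt_mem_nhds hpos)).and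
    (eventually_ge_atTop (k + 1))).exists
  obtain ⟨a, rfl⟩ := Nat.exists_eq_add_of_le hmk
  have i2 := tail a (k + 1)
  rw [hq.sub_comm] at i2
  have i3 : q (f (k + 1) - g) < 4 * hq.qC ^ 2 * e (k + 1) := by
    have hee := he (k + 1)
    have : 0 < hq.qC * (hq.qC * e (k + 1)) := by positivity
    calc _ ≤ _ := hq.tri3 _ (f (k + 1 + a)) _
      _ ≤ hq.qC * (2 * hq.qC * e (k + 1) + hq.qC * e (k + 1)) := by gcongr
      _ < _ := by nlinarith
  linarith

/-- multiplier lemma: constant depending only on the quasi-norm -/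
lemma IsQuasiBanach.mult (hq : IsQuasiBanach q) : ∃ D : ℝ, 0 < D ∧
    ∀ {α : Type _} (G : Finset α) (v : α → M) (ε : ℝ), (∀ H ⊆ G, q (∑ n ∈ H, v n) ≤ ε) →
    ∀ a : α → ℝ, (∀ n, |a n| ≤ 1) → q (∑ n ∈ G, a n • v n) ≤ D * ε := by
  classical
  have hp := hq.pos
  have h1 := hq.one_le
  obtain ⟨B, hB⟩ := exists_nat_ge (2 * hq.qC)
  have hB0 : (0 : ℝ) < B := by linarith
  set E : ℝ := hq.qC ^ B * B with hE
  have hE0 : 0 < E := by positivity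
  refine ⟨4 * hq.qC * E, by positivity, ?_⟩
  intro α G v ε hG
  have hε : 0 ≤ ε := by simpa [hq.zero] using hG ∅ (Finset.empty_subset _)
  -- nonnegative multipliers
  have key : ∀ a : α → ℝ, (∀ n, 0 ≤ a n ∧ a n ≤ 1) → q (∑ n ∈ G, a n • v n) ≤ 2 * E * ε := by
    let A : Set ℝ := {r | ∃ a : α → ℝ, (∀ n, 0 ≤ a n ∧ a n ≤ 1) ∧ r = q (∑ n ∈ G, a n • v n)}
    have hbdd : BddAbove A := by
      refine ⟨hq.qC ^ G.card * ∑ n ∈ G, q (v n), ?_⟩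
      rintro r ⟨a, ha, rfl⟩
      refine (hq.sum_le G _).trans ?_
      gcongr with n hn
      rw [hq.q_smul, abs_of_nonneg (ha n).1]
      exact mul_le_of_le_one_left (hq.q_nonneg _) (ha n).2
    have hne : A.Nonempty := ⟨_, fun _ => 0, by simp, rfl⟩
    have hS : sSup A ≤ 2 * E * ε := by
      have : ∀ r ∈ A, r ≤ E * ε + sSup A / 2 := by
        rintro r ⟨a, ha, rfl⟩
        have hfl : ∀ n, (0:ℝ) ≤ B * a n := fun n => mul_nonneg hB0.le (ha n).1
        have dec : ∑ n ∈ G, a n • v n = (1 / (B : ℝ)) •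
            ((∑ j ∈ Finset.range B, ∑ n ∈ G.filter (fun n => j < ⌊(B : ℝ) * a n⌋₊), v n) +
              ∑ n ∈ G, (Int.fract ((B : ℝ) * a n)) • v n) := by
          simp_rw [Finset.sum_filter]
          rw [Finset.sum_comm, ← Finset.sum_add_distrib, Finset.smul_sum]
          refine Finset.sum_congr rfl fun n hn => ?_
          have c1 : ∑ j ∈ Finset.range B, (if j < ⌊(B : ℝ) * a n⌋₊ then v n else 0)
              = (⌊(B : ℝ) * a n⌋₊ : ℝ) • v n := by
            rw [← Finset.sum_filter, Finset.sum_const]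
            have : (Finset.range B).filter (fun j => j < ⌊(B : ℝ) * a n⌋₊)
                = Finset.range ⌊(B : ℝ) * a n⌋₊ := by
              ext j
              simp only [Finset.mem_filter, Finset.mem_range, and_iff_right_iff_imp]
              intro hj
              refine lt_of_lt_of_le hj (Nat.floor_le_of_le ?_)
              exact mul_le_of_le_one_right hB0.le (ha n).2
            rw [this, Finset.card_range, Nat.cast_smul_eq_nsmul]
          rw [c1, ← add_smul, smul_smul]
          congr 1
          have : (⌊(B : ℝ) * a n⌋₊ : ℝ) + Int.fract ((B : ℝ) * a n) = B * a n := by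
            rw [natCast_floor_eq_intCast_floor (hfl n)]
            exact Int.floor_add_fract _
          rw [this]
          field_simp
        rw [dec, hq.q_smul, abs_of_pos (by positivity)]
        have t1 : q (∑ j ∈ Finset.range B,
            ∑ n ∈ G.filter (fun n => j < ⌊(B : ℝ) * a n⌋₊), v n) ≤ E * ε := by
          refine (hq.sum_le _ _).trans ?_
          rw [Finset.card_range, hE, mul_assoc]
          gcongr
          calc _ ≤ ∑ j ∈ Finset.range B, ε :=
                Finset.sum_le_sum fun j _ => hG _ (Finset.filter_subset _ _)
            _ = _ := by simp
        have t2 : q (∑ n ∈ G, (Int.fract ((B : ℝ) * a n)) • v n) ≤ sSup A :=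
          le_csSup hbdd ⟨_, fun n => ⟨Int.fract_nonneg _, (Int.fract_lt_one _).le⟩, rfl⟩
        have t0 : 0 ≤ sSup A := (hq.q_nonneg _).trans t2
        calc _ ≤ 1 / (B : ℝ) * (hq.qC * (E * ε + sSup A)) := by
              gcongr
              refine (hq.tri _ _).trans ?_
              gcongr
          _ ≤ 1 / (2 * hq.qC) * (hq.qC * (E * ε + sSup A)) := by gcongr
          _ = E * ε / 2 + sSup A / 2 := by field_simp
          _ ≤ _ := by
            have : 0 ≤ E * ε := by positivity
            linarith
      have := csSup_le hne this
      linarith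
    intro a ha
    exact (le_csSup hbdd ⟨a, ha, rfl⟩).trans hS
  intro a ha
  have e : ∑ n ∈ G, a n • v n = ∑ n ∈ G, (max (a n) 0) • v n - ∑ n ∈ G, (max (-a n) 0) • v n := by
    rw [← Finset.sum_sub_distrib]
    refine Finset.sum_congr rfl fun n _ => ?_
    rw [← sub_smul]
    congr 1
    rcases le_total 0 (a n) with h | h
    · rw [max_eq_left h, max_eq_right (by linarith)]; ring
    · rw [max_eq_right h, max_eq_left (by linarith)]; ring
  rw [e]
  have k1 := key (fun n => max (a n) 0) fun n => ⟨le_max_right _ _,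
    max_le (abs_le.1 (ha n)).2 zero_le_one⟩
  have k2 := key (fun n => max (-a n) 0) fun n => ⟨le_max_right _ _,
    max_le (by linarith [(abs_le.1 (ha n)).1]) zero_le_one⟩
  calc _ ≤ _ := hq.tri_sub _ _
    _ ≤ hq.qC * (2 * E * ε + 2 * E * ε) := by gcongr
    _ = _ := by ring

/-- all multiplied finite partial sums of the expansion of `f` are bounded by `R` -/
def Bd (hq : IsQuasiBanach q) {ι : Type*} {x : ι → M} (hb : IsUncondBasis q x) (f : M) (R : ℝ) :
    Prop :=
  ∀ (F : Finset ι) (a : ι → ℝ), (∀ n, |a n| ≤ 1) → q (∑ n ∈ F, (a n * bcoord hq hb n f) • x n) ≤ R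

lemma Bd.exists (hq : IsQuasiBanach q) {ι : Type*} {x : ι → M} (hb : IsUncondBasis q x) (f : M) :
    ∃ R, Bd hq hb f R := by
  classical
  have hp := hq.pos
  obtain ⟨D, hD, hmul⟩ := hq.mult
  obtain ⟨F, hF⟩ := (bcoord_sum hq hb f).ucauchy hq 1 one_pos
  refine ⟨hq.qC * (hq.qC ^ F.card * (∑ n ∈ F, q (bcoord hq hb n f • x n)) + D * 1), ?_⟩
  intro G a ha
  simp_rw [mul_smul]
  rw [← Finset.sum_inter_add_sum_sdiff G F]
  have h2 : q (∑ n ∈ G \ F, a n • bcoord hq hb n f • x n) ≤ D * 1 := by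
    apply hmul _ _ _ _ _ ha
    intro H hH
    exact (hF H (Finset.disjoint_of_subset_right hH Finset.disjoint_sdiff)).le
  have h1 : q (∑ n ∈ G ∩ F, a n • bcoord hq hb n f • x n) ≤
      hq.qC ^ F.card * (∑ n ∈ F, q (bcoord hq hb n f • x n)) := by
    refine (hq.sum_le _ _).trans ?_
    have c1 : hq.qC ^ (G ∩ F).card ≤ hq.qC ^ F.card :=
      pow_le_pow_right₀ hq.one_le (Finset.card_le_card Finset.inter_subset_right)
    have c2 : ∑ n ∈ G ∩ F, q (a n • bcoord hq hb n f • x n) ≤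
        ∑ n ∈ F, q (bcoord hq hb n f • x n) := by
      refine (Finset.sum_le_sum (g := fun n => q (bcoord hq hb n f • x n)) fun n _ => ?_).trans
        (Finset.sum_le_sum_of_subset_of_nonneg Finset.inter_subset_right
          fun _ _ _ => hq.q_nonneg _)
      rw [hq.q_smul]
      exact mul_le_of_le_one_left (hq.q_nonneg _) (ha n)
    have c3 : 0 ≤ ∑ n ∈ G ∩ F, q (a n • bcoord hq hb n f • x n) :=
      Finset.sum_nonneg fun _ _ => hq.q_nonneg _
    gcongr
  calc _ ≤ _ := hq.tri _ _
    _ ≤ _ := by gcongr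

lemma Bd.add (hq : IsQuasiBanach q) {ι : Type*} {x : ι → M} {hb : IsUncondBasis q x} {f g : M}
    {R S : ℝ} (hf : Bd hq hb f R) (hg : Bd hq hb g S) : Bd hq hb (f + g) (hq.qC * (R + S)) := by
  intro F a ha
  have := hq.pos
  simp only [map_add, mul_add, add_smul, Finset.sum_add_distrib]
  refine (hq.tri _ _).trans ?_
  rw [← mul_add]
  exact mul_le_mul_of_nonneg_left (add_le_add (hf F a ha) (hg F a ha)) hq.pos.le

lemma Bd.smul (hq : IsQuasiBanach q) {ι : Type*} {x : ι → M} {hb : IsUncondBasis q x} {f : M}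
    {R : ℝ} (c : ℝ) (hf : Bd hq hb f R) : Bd hq hb (c • f) (|c| * R) := by
  intro F a ha
  have e : ∑ n ∈ F, (a n * bcoord hq hb n (c • f)) • x n
      = c • ∑ n ∈ F, (a n * bcoord hq hb n f) • x n := by
    rw [Finset.smul_sum]
    refine Finset.sum_congr rfl fun n _ => ?_
    rw [map_smul, smul_smul, smul_eq_mul]
    congr 1; ring
  rw [e, hq.q_smul]
  exact mul_le_mul_of_nonneg_left (hf F a ha) (abs_nonneg c)

lemma Bd.zero (hq : IsQuasiBanach q) {ι : Type*} {x : ι → M} (hb : IsUncondBasis q x) {R : ℝ}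
    (hR : 0 ≤ R) : Bd hq hb 0 R := by
  intro F a ha
  simpa [hq.zero] using hR

lemma Bd.mono (hq : IsQuasiBanach q) {ι : Type*} {x : ι → M} {hb : IsUncondBasis q x} {f : M}
    {R S : ℝ} (hf : Bd hq hb f R) (h : R ≤ S) : Bd hq hb f S := fun F a ha => (hf F a ha).trans h

lemma Bd.dense (hq : IsQuasiBanach q) {ι : Type*} {x : ι → M} (hb : IsUncondBasis q x) :
    ∃ R : ℝ, 0 < R ∧ ∀ (g : M) (t : ℝ), 0 < t → q g ≤ t → ∀ η : ℝ, 0 < η →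
      ∃ b, Bd hq hb b (R * t) ∧ q (g - b) < η := by
  have hp := hq.pos
  obtain ⟨k, f₀, ε, hε, hk⟩ := hq.baire (fun k : ℕ => {f | Bd hq hb f k}) (by
    intro f
    obtain ⟨R, hR⟩ := Bd.exists hq hb f
    obtain ⟨k, hk⟩ := exists_nat_ge R
    exact ⟨k, hR.mono hq hk⟩)
  have main : ∀ g, q g < ε → ∀ η : ℝ, 0 < η →
      ∃ b, Bd hq hb b (hq.qC * (k + k)) ∧ q (g - b) < η := by
    intro g hg η hη
    have hη' : 0 < η / (2 * hq.qC) := by positivity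
    obtain ⟨b₁, hb₁, hb₁'⟩ := hk (f₀ + g) (by simpa using hg) _ hη'
    obtain ⟨b₂, hb₂, hb₂'⟩ := hk f₀ (by simpa [hq.zero] using hε) _ hη'
    refine ⟨b₁ + (-1 : ℝ) • b₂, Bd.add hq hb₁ ?_, ?_⟩
    · have := Bd.smul hq (-1) hb₂
      simpa using this
    · have e : g - (b₁ + (-1 : ℝ) • b₂) = (f₀ + g - b₁) - (f₀ - b₂) := by
        rw [neg_one_smul]; abel
      rw [e]
      calc _ ≤ _ := hq.tri_sub _ _
        _ < hq.qC * (η / (2 * hq.qC) + η / (2 * hq.qC)) := by gcongr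
        _ = η := by field_simp; ring
  refine ⟨2 / ε * (hq.qC * (k + k)) + 1, by positivity, ?_⟩
  intro g t ht hg η hη
  have hc : 0 < ε / (2 * t) := by positivity
  obtain ⟨b, hb1, hb2⟩ := main ((ε / (2 * t)) • g) (by
    rw [hq.q_smul, abs_of_pos hc]
    calc _ ≤ ε / (2 * t) * t := by gcongr
      _ = ε / 2 := by field_simp
      _ < ε := by linarith) (ε / (2 * t) * η) (by positivity)
  refine ⟨(ε / (2 * t))⁻¹ • b, (Bd.smul hq _ hb1).mono hq ?_, ?_⟩
  · rw [abs_of_pos (by positivity)]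
    have : (ε / (2 * t))⁻¹ * (hq.qC * (k + k)) = 2 / ε * (hq.qC * (k + k)) * t := by
      field_simp
    rw [this]
    nlinarith
  · have e : g - (ε / (2 * t))⁻¹ • b = (ε / (2 * t))⁻¹ • ((ε / (2 * t)) • g - b) := by
      rw [smul_sub, smul_smul, inv_mul_cancel₀ hc.ne', one_smul]
    rw [e, hq.q_smul, abs_of_pos (by positivity), inv_mul_lt_iff₀ hc]
    exact hb2

lemma Bd.bound_aux (hq : IsQuasiBanach q) {ι : Type*} {x : ι → M} (hb : IsUncondBasis q x)
    (hn : Normalized q x) :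
    ∃ R : ℝ, 0 < R ∧ ∀ (f : M) (t : ℝ), 0 < t → q f ≤ t → Bd hq hb f (R * t) := by
  have hp := hq.pos
  have h1 := hq.one_le
  obtain ⟨R, hR, hdense⟩ := Bd.dense hq hb
  refine ⟨2 * hq.qC ^ 2 * R, by positivity, ?_⟩
  intro f t ht hft
  set θ : ℝ := 1 / (2 * hq.qC) with hθ
  have hθ0 : 0 < θ := by positivity
  have hθ2 : 2 * hq.qC * θ = 1 := by rw [hθ]; field_simp
  have hθ1 : θ ≤ 1 / 2 := by nlinarith
  choose! b hbB hbq using hdense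
  -- remainders
  let rem : ℕ → M := fun n => Nat.rec f (fun j r => r - b r (t * θ ^ j) (t * θ ^ (j + 1))) n
  let g : ℕ → M := fun j => b (rem j) (t * θ ^ j) (t * θ ^ (j + 1))
  have hrem_succ : ∀ j, rem (j + 1) = rem j - g j := fun j => rfl
  have hrem : ∀ j, q (rem j) ≤ t * θ ^ j := by
    intro j
    induction j with
    | zero => simpa [rem] using hft
    | succ j ih => exact (hbq (rem j) (t * θ ^ j) (by positivity) ih _ (by positivity)).le
  have hg : ∀ j, Bd hq hb (g j) (R * t * θ ^ j) := by
    intro j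
    have := hbB (rem j) (t * θ ^ j) (by positivity) (hrem j) (t * θ ^ (j + 1)) (by positivity)
    rwa [← mul_assoc] at this
  let h : ℕ → M := fun j => f - rem j
  have hh0 : h 0 = 0 := by simp [h, rem]
  have hh : ∀ j, h (j + 1) - h j = g j := by
    intro j; simp only [h, hrem_succ]; abel
  have tail : ∀ d j, Bd hq hb (h (j + d) - h j) (2 * hq.qC * (R * t * θ ^ j)) := by
    intro d
    induction d with
    | zero => intro j; simp only [add_zero, sub_self]; exact Bd.zero hq hb (by positivity)
    | succ d ih =>
      intro j
      have e : h (j + (d + 1)) - h j = g j + (h (j + 1 + d) - h (j + 1)) := by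
        rw [← hh j, show j + (d + 1) = j + 1 + d by ring]; abel
      rw [e]
      refine (Bd.add hq (hg j) (ih (j + 1))).mono hq (le_of_eq ?_)
      rw [pow_succ]
      linear_combination hq.qC * R * t * θ ^ j * hθ2
  -- coordinates converge
  have cbd : ∀ n f' S, Bd hq hb f' S → |bcoord hq hb n f'| ≤ S := by
    intro n f' S hS
    have := hS {n} (fun _ => 1) (by simp)
    simpa [hq.q_smul, hn n] using this
  have hconv : ∀ n, ∃ β, Tendsto (fun j => bcoord hq hb n (h j)) atTop (𝓝 β) := by
    intro n
    apply cauchySeq_tendsto_of_complete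
    refine cauchySeq_of_le_geometric θ (R * t) (by linarith) fun j => ?_
    rw [dist_comm, Real.dist_eq, ← map_sub, hh]
    exact cbd _ _ _ (hg j)
  choose β hβ using hconv
  have lim : ∀ j (F : Finset ι) (a : ι → ℝ), (∀ n, |a n| ≤ 1) →
      q (∑ n ∈ F, (a n * (β n - bcoord hq hb n (h j))) • x n)
        ≤ hq.qC * (2 * hq.qC * (R * t * θ ^ j)) := by
    intro j F a ha
    have T : Tendsto (fun j' => hq.qC * ((hq.qC ^ F.card *
        ∑ n ∈ F, |β n - bcoord hq hb n (h j')|) + 2 * hq.qC * (R * t * θ ^ j))) atTop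
        (𝓝 (hq.qC * ((hq.qC ^ F.card * ∑ n ∈ F, |β n - β n|) + 2 * hq.qC * (R * t * θ ^ j)))) := by
      refine Tendsto.const_mul _ (Tendsto.add_const _ (Tendsto.const_mul _ ?_))
      exact tendsto_finsetSum _ fun n _ => ((hβ n).const_sub _).abs
    simp only [sub_self, abs_zero, Finset.sum_const_zero, mul_zero, zero_add] at T
    refine ge_of_tendsto T ?_
    filter_upwards [eventually_ge_atTop j] with j' hj'
    obtain ⟨d, rfl⟩ := Nat.exists_eq_add_of_le hj'
    have e : ∑ n ∈ F, (a n * (β n - bcoord hq hb n (h j))) • x n =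
        ∑ n ∈ F, (a n * (β n - bcoord hq hb n (h (j + d)))) • x n +
        ∑ n ∈ F, (a n * bcoord hq hb n (h (j + d) - h j)) • x n := by
      rw [← Finset.sum_add_distrib]
      refine Finset.sum_congr rfl fun n _ => ?_
      rw [← add_smul, map_sub (bcoord hq hb n) (h (j + d)) (h j)]
      congr 1; ring
    rw [e]
    refine (hq.tri _ _).trans ?_
    have i1 := tail d j F a ha
    have i2 : q (∑ n ∈ F, (a n * (β n - bcoord hq hb n (h (j + d)))) • x n) ≤
        hq.qC ^ F.card * ∑ n ∈ F, |β n - bcoord hq hb n (h (j + d))| := by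
      refine (hq.sum_le _ _).trans ?_
      gcongr with n _
      rw [hq.q_smul, hn n, mul_one, abs_mul]
      exact mul_le_of_le_one_left (abs_nonneg _) (ha n)
    gcongr
  have hpow : ∀ j, θ ^ j ≤ (1 / 2 : ℝ) ^ j := fun j => pow_le_pow_left₀ hθ0.le hθ1 j
  have hsum : UncondSum q (fun n => β n • x n) f := by
    intro ε hε
    obtain ⟨j, hj⟩ := exists_pow_small
      (c := hq.qC * (hq.qC * (2 * hq.qC * (R * t))) + hq.qC * (hq.qC * t)) (ε / 2) (by positivity)
    obtain ⟨F, hF⟩ := bcoord_sum hq hb (h j) (ε / (2 * hq.qC ^ 2)) (by positivity)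
    refine ⟨F, fun G hG => ?_⟩
    have i1 := lim j G (fun _ => 1) (by simp)
    have i2 := hF G hG
    have i3 : q (h j - f) ≤ t * θ ^ j := by
      have : h j - f = - rem j := by simp [h]
      rw [this, hq.neg]; exact hrem j
    have e : ∑ n ∈ G, β n • x n - f = ∑ n ∈ G, (1 * (β n - bcoord hq hb n (h j))) • x n +
        ((∑ n ∈ G, bcoord hq hb n (h j) • x n - h j) + (h j - f)) := by
      simp only [one_mul, sub_smul, Finset.sum_sub_distrib]; abel
    rw [e]
    calc _ ≤ _ := hq.tri _ _
      _ ≤ hq.qC * (hq.qC * (2 * hq.qC * (R * t * θ ^ j)) +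
            hq.qC * (ε / (2 * hq.qC ^ 2) + t * θ ^ j)) := by
          gcongr
          refine (hq.tri _ _).trans ?_
          gcongr
      _ = (hq.qC * (hq.qC * (2 * hq.qC * (R * t))) + hq.qC * (hq.qC * t)) * θ ^ j + ε / 2 := by
          field_simp
          ring
      _ ≤ (hq.qC * (hq.qC * (2 * hq.qC * (R * t))) + hq.qC * (hq.qC * t)) * (1 / 2) ^ j + ε / 2 := by
          gcongr
      _ < ε / 2 + ε / 2 := by gcongr
      _ = ε := by ring
  intro F a ha
  have := lim 0 F a ha
  simp only [hh0, map_zero, sub_zero, pow_zero, mul_one, bcoord_unique hq hb hsum] at this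
  refine this.trans (le_of_eq ?_)
  ring

lemma Bd.bound (hq : IsQuasiBanach q) {ι : Type*} {x : ι → M} (hb : IsUncondBasis q x)
    (hn : Normalized q x) : ∃ R : ℝ, 0 < R ∧ ∀ f : M, Bd hq hb f (R * q f) := by
  obtain ⟨R, hR, h⟩ := Bd.bound_aux hq hb hn
  refine ⟨R, hR, fun f => ?_⟩
  by_cases hf : f = 0
  · subst hf
    exact Bd.zero hq hb (mul_nonneg hR.le (hq.q_nonneg _))
  · exact h f (q f) (hq.q_pos f hf) le_rfl

/-- one-sided domination of families on a set of indices -/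
def DomOn (q : M → ℝ) {α : Type*} (A : Set α) (u v : α → M) (D : ℝ) : Prop :=
  ∀ F : Finset α, (∀ n ∈ F, n ∈ A) → ∀ a : α → ℝ,
    q (∑ n ∈ F, a n • v n) ≤ D * q (∑ n ∈ F, a n • u n)

/-- two-sided equivalence on a set of indices -/
def EqvOn (q : M → ℝ) {α : Type*} (A : Set α) (u v : α → M) : Prop :=
  ∃ D : ℝ, 0 < D ∧ DomOn q A u v D ∧ DomOn q A v u D

/-- unconditionality with constant `K` -/
def Unc (q : M → ℝ) {α : Type*} (u : α → M) (K : ℝ) : Prop :=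
  ∀ (F : Finset α) (a b : α → ℝ), (∀ n ∈ F, |b n| ≤ |a n|) →
    q (∑ n ∈ F, b n • u n) ≤ K * q (∑ n ∈ F, a n • u n)

lemma EqvOn.symm {α : Type*} {A : Set α} {u v : α → M} (h : EqvOn q A u v) : EqvOn q A v u := by
  obtain ⟨D, hD, h1, h2⟩ := h
  exact ⟨D, hD, h2, h1⟩

lemma DomOn.trans {α : Type*} {A : Set α} {u v w : α → M} {D E : ℝ} (hE : 0 < E)
    (h : DomOn q A u v D) (h' : DomOn q A v w E) : DomOn q A u w (E * D) := by
  intro F hF a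
  calc _ ≤ _ := h' F hF a
    _ ≤ E * (D * q (∑ n ∈ F, a n • u n)) := by
      gcongr
      exact h F hF a
    _ = _ := by ring

lemma EqvOn.trans {α : Type*} {A : Set α} {u v w : α → M} (h : EqvOn q A u v)
    (h' : EqvOn q A v w) : EqvOn q A u w := by
  obtain ⟨D, hD, h1, h2⟩ := h
  obtain ⟨E, hE, h3, h4⟩ := h'
  refine ⟨E * D, by positivity, h1.trans hE h3, ?_⟩
  rw [mul_comm]
  exact h4.trans hD h2

lemma sum_fib {α β : Type*} [DecidableEq β] (F : Finset α) (f : α → β) (a : α → ℝ) (v : β → M) :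
    ∑ n ∈ F, a n • v (f n) = ∑ k ∈ F.image f, (∑ n ∈ F with f n = k, a n) • v k := by
  rw [← Finset.sum_fiberwise_of_maps_to (t := F.image f) (g := f)
    (fun n hn => Finset.mem_image_of_mem f hn)]
  refine Finset.sum_congr rfl fun k _ => ?_
  rw [Finset.sum_smul]
  refine Finset.sum_congr rfl fun n hn => ?_
  rw [(Finset.mem_filter.1 hn).2]

lemma DomOn.comp {α β : Type*} {A : Set α} {B : Set β} {u v : β → M} {D : ℝ}
    (h : DomOn q B u v D) (f : α → β) (hf : ∀ n ∈ A, f n ∈ B) :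
    DomOn q A (fun n => u (f n)) (fun n => v (f n)) D := by
  classical
  intro F hF a
  rw [sum_fib F f a v, sum_fib F f a u]
  apply h
  intro k hk
  obtain ⟨n, hn, rfl⟩ := Finset.mem_image.1 hk
  exact hf n (hF n hn)

lemma EqvOn.comp {α β : Type*} {A : Set α} {B : Set β} {u v : β → M}
    (h : EqvOn q B u v) (f : α → β) (hf : ∀ n ∈ A, f n ∈ B) :
    EqvOn q A (fun n => u (f n)) (fun n => v (f n)) := by
  obtain ⟨D, hD, h1, h2⟩ := h
  exact ⟨D, hD, h1.comp f hf, h2.comp f hf⟩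

lemma EqvOn.congr {α : Type*} {A : Set α} {u v u' v' : α → M}
    (h : EqvOn q A u v) (hu : ∀ n ∈ A, u n = u' n) (hv : ∀ n ∈ A, v n = v' n) :
    EqvOn q A u' v' := by
  obtain ⟨D, hD, h1, h2⟩ := h
  have e : ∀ (F : Finset α), (∀ n ∈ F, n ∈ A) → ∀ a : α → ℝ,
      ∑ n ∈ F, a n • u n = ∑ n ∈ F, a n • u' n ∧ ∑ n ∈ F, a n • v n = ∑ n ∈ F, a n • v' n :=
    fun F hF a => ⟨Finset.sum_congr rfl fun n hn => by rw [hu n (hF n hn)],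
      Finset.sum_congr rfl fun n hn => by rw [hv n (hF n hn)]⟩
  refine ⟨D, hD, fun F hF a => ?_, fun F hF a => ?_⟩
  · rw [← (e F hF a).1, ← (e F hF a).2]; exact h1 F hF a
  · rw [← (e F hF a).1, ← (e F hF a).2]; exact h2 F hF a

lemma Unc.comp {α β : Type*} {u : β → M} {K : ℝ} (h : Unc q u K) (f : α → β)
    (hf : Function.Injective f) : Unc q (fun n => u (f n)) K := by
  intro F a b hab
  have e : ∀ c : α → ℝ, ∑ n ∈ F, c n • u (f n) =
      ∑ k ∈ F.map ⟨f, hf⟩, Function.extend f c 0 k • u k := by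
    intro c
    rw [Finset.sum_map]
    refine Finset.sum_congr rfl fun n _ => ?_
    simp [hf.extend_apply]
  rw [e, e]
  apply h
  intro k hk
  obtain ⟨n, hn, rfl⟩ := Finset.mem_map.1 hk
  simpa [hf.extend_apply] using hab n hn

lemma Unc.basis (hq : IsQuasiBanach q) {ι : Type*} {x : ι → M} (hb : IsUncondBasis q x)
    (hn : Normalized q x) : ∃ K : ℝ, 0 < K ∧ Unc q x K := by
  classical
  obtain ⟨R, hR, h⟩ := Bd.bound hq hb hn
  refine ⟨R, hR, fun F a b hab => ?_⟩
  have := h (∑ n ∈ F, a n • x n) F (fun n => if n ∈ F then b n / a n else 0) (by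
    intro n
    split_ifs with hnF
    · rw [abs_div]; exact div_le_one_of_le₀ (hab n hnF) (abs_nonneg _)
    · simp)
  refine le_of_eq_of_le (congrArg q (Finset.sum_congr rfl fun n hnF => ?_)) this
  rw [bcoord_finsum hq hb F a n hnF, if_pos hnF]
  by_cases h0 : a n = 0
  · have := hab n hnF
    rw [h0, abs_zero] at this
    have : b n = 0 := abs_nonpos_iff.1 this
    simp [this]
  · rw [div_mul_cancel₀ _ h0]

lemma DomOn.glue (hq : IsQuasiBanach q) {α τ : Type*} [Fintype τ] {u v : α → M} {K : ℝ}
    (hK : 0 < K) (hu : Unc q u K) (c : α → τ) (D : τ → ℝ) (hD : ∀ t, 0 < D t)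
    (h : ∀ t, DomOn q {n | c n = t} u v (D t)) :
    ∃ E, 0 < E ∧ DomOn q Set.univ u v E := by
  classical
  have hp := hq.pos
  have hDs : 0 ≤ ∑ t, D t := Finset.sum_nonneg fun t _ => (hD t).le
  refine ⟨hq.qC ^ (Finset.univ : Finset τ).card * ((∑ t, D t) * K) + 1, by positivity, ?_⟩
  intro F _ a
  rw [← Finset.sum_fiberwise F c (fun n => a n • v n)]
  have h0 := hq.q_nonneg (∑ n ∈ F, a n • u n)
  have i : ∀ t, q (∑ n ∈ F with c n = t, a n • v n) ≤ D t * (K * q (∑ n ∈ F, a n • u n)) := by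
    intro t
    refine (h t (F.filter fun n => c n = t) (fun n hn => (Finset.mem_filter.1 hn).2) a).trans ?_
    have := hD t
    gcongr
    have := hu F a (fun n => if c n = t then a n else 0) (by
      intro n _
      split_ifs <;> simp)
    refine le_of_eq_of_le (congrArg q ?_) this
    rw [Finset.sum_filter]
    refine Finset.sum_congr rfl fun n _ => ?_
    split_ifs <;> simp
  calc _ ≤ _ := hq.sum_le _ _
    _ ≤ hq.qC ^ (Finset.univ : Finset τ).card * ∑ t, D t * (K * q (∑ n ∈ F, a n • u n)) := by
      gcongr with t _
      exact i t
    _ = hq.qC ^ (Finset.univ : Finset τ).card * ((∑ t, D t) * K) * q (∑ n ∈ F, a n • u n) := by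
      rw [← Finset.sum_mul]; ring
    _ ≤ _ := by nlinarith

lemma EqvOn.glue (hq : IsQuasiBanach q) {α τ : Type*} [Fintype τ] {u v : α → M} {K L : ℝ}
    (hK : 0 < K) (hu : Unc q u K) (hL : 0 < L) (hv : Unc q v L) (c : α → τ)
    (h : ∀ t, EqvOn q {n | c n = t} u v) : EqvOn q Set.univ u v := by
  choose D hD h1 h2 using h
  obtain ⟨E, hE, h3⟩ := DomOn.glue hq hK hu c D hD h1
  obtain ⟨E', hE', h4⟩ := DomOn.glue hq hL hv c D hD h2
  refine ⟨max E E', lt_max_of_lt_left hE, fun F hF a => (h3 F hF a).trans ?_,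
    fun F hF a => (h4 F hF a).trans ?_⟩
  · exact mul_le_mul_of_nonneg_right (le_max_left _ _) (hq.q_nonneg _)
  · exact mul_le_mul_of_nonneg_right (le_max_right _ _) (hq.q_nonneg _)

lemma EquivalentFamilies.fin {M' : Type*} [AddCommGroup M'] [Module ℝ M'] {q' : M' → ℝ} {α : Type*}
    {u : α → M} {v : α → M'} {C : ℝ} (hC : 0 < C) (h : EquivalentFamilies q q' u v C)
    (F : Finset α) (a : α → ℝ) :
    q' (∑ n ∈ F, a n • v n) ≤ C * q (∑ n ∈ F, a n • u n) ∧
    q (∑ n ∈ F, a n • u n) ≤ C * q' (∑ n ∈ F, a n • v n) := by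
  classical
  let b : α →₀ ℝ := Finsupp.onFinset F (fun n => if n ∈ F then a n else 0) (by
    intro n hn; by_contra hc; simp [hc] at hn)
  have hbs : b.support ⊆ F := Finsupp.support_onFinset_subset
  have e1 : ∑ n ∈ b.support, b n • u n = ∑ n ∈ F, a n • u n := by
    rw [Finset.sum_subset hbs]
    · exact Finset.sum_congr rfl fun n hn => by simp [b, hn]
    · intro n _ hn
      rw [Finsupp.notMem_support_iff.1 hn, zero_smul]
  have e2 : ∑ n ∈ b.support, b n • v n = ∑ n ∈ F, a n • v n := by
    rw [Finset.sum_subset hbs]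
    · exact Finset.sum_congr rfl fun n hn => by simp [b, hn]
    · intro n _ hn
      rw [Finsupp.notMem_support_iff.1 hn, zero_smul]
  have := h b
  rw [e1, e2] at this
  refine ⟨this.2, ?_⟩
  have h1 := this.1
  rwa [inv_mul_le_iff₀ hC] at h1

lemma qPow_single (hq : IsQuasiBanach q) {s : ℕ} (j : Fin s) (f : M) :
    qPow q s (Pi.single j f) = q f := by
  have : Nonempty (Fin s) := ⟨j⟩
  apply le_antisymm
  · apply ciSup_le
    intro i
    by_cases hi : i = j
    · subst hi; simp
    · simp [hi, hq.zero, hq.q_nonneg]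
  · have := le_ciSup (f := fun i => q ((Pi.single j f : Fin s → M) i)) (Set.finite_range _).bddAbove j
    simpa [qPow] using this

lemma levels (hq : IsQuasiBanach q) {ι κ : Type*} {x : ι → M} {S : Set ι} {s : ℕ} {z : κ → M}
    {C : ℝ} (hC : 0 < C) (p : κ → Fin s × S)
    (h : EquivalentFamilies q (qPow q s) z (fun m => powerFamily x S s (p m)) C) (j : Fin s) :
    EqvOn q {m | (p m).1 = j} z (fun m => x (p m).2) := by
  have e : ∀ F : Finset κ, (∀ m ∈ F, (p m).1 = j) → ∀ a : κ → ℝ,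
      qPow q s (∑ m ∈ F, a m • powerFamily x S s (p m)) = q (∑ m ∈ F, a m • x (p m).2) := by
    intro F hF a
    rw [← qPow_single hq j]
    congr 1
    have : ∀ m ∈ F, a m • powerFamily x S s (p m) = 
        LinearMap.single ℝ (fun _ : Fin s => M) j (a m • x (p m).2) := by
      intro m hm
      rw [map_smul]
      simp only [powerFamily, hF m hm, LinearMap.single_apply]
    rw [Finset.sum_congr rfl this, ← map_sum, LinearMap.single_apply]
  refine ⟨C, hC, fun F hF a => ?_, fun F hF a => ?_⟩
  · rw [← e F hF a]; exact (h.fin hC F a).1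
  · rw [← e F hF a]; exact (h.fin hC F a).2

/-- operators defined by unconditional series -/
lemma exists_op (hq : IsQuasiBanach q) {α : Type*} (c : α → M →ₗ[ℝ] ℝ) (u v : α → M) {K D : ℝ}
    (hK : 0 < K) (hD : 0 < D)
    (hC : ∀ f, UCauchy q (fun n => c n f • u n))
    (hb : ∀ f (F : Finset α), q (∑ n ∈ F, c n f • u n) ≤ K * q f)
    (hdom : DomOn q Set.univ u v D) :
    ∃ (L : M →ₗ[ℝ] M) (E : ℝ), 0 < E ∧ (∀ f, UncondSum q (fun n => c n f • v n) (L f)) ∧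
      ∀ f, q (L f) ≤ E * q f := by
  have hp := hq.pos
  have hex : ∀ f, ∃ g, UncondSum q (fun n => c n f • v n) g := by
    intro f
    apply UCauchy.exists_sum hq
    intro ε hε
    obtain ⟨F, hF⟩ := hC f (ε / D) (by positivity)
    refine ⟨F, fun G hG => (hdom G (by simp) _).trans_lt ?_⟩
    have := hF G hG
    rwa [lt_div_iff₀ hD, mul_comm] at this
  choose L hL using hex
  refine ⟨⟨⟨L, ?_⟩, ?_⟩, hq.qC * (D * K), by positivity, hL, ?_⟩
  · intro f g
    refine (hL (f + g)).unique hq ?_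
    simpa only [map_add, add_smul] using (hL f).add hq (hL g)
  · intro r f
    refine (hL (r • f)).unique hq ?_
    simpa only [map_smul, smul_smul, smul_eq_mul, RingHom.id_apply] using (hL f).smul hq r
  · intro f
    change q (L f) ≤ _
    refine le_of_forall_pos_le_add fun ε hε => ?_
    obtain ⟨F, hF⟩ := hL f (ε / hq.qC) (by positivity)
    have h1 := hF F subset_rfl
    rw [hq.sub_comm] at h1
    have h2 := (hdom F (by simp) (fun n => c n f)).trans
      (mul_le_mul_of_nonneg_left (hb f F) hD.le)
    have h3 := hq.tri (L f - ∑ n ∈ F, c n f • v n) (∑ n ∈ F, c n f • v n)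
    rw [sub_add_cancel] at h3
    calc _ ≤ _ := h3
      _ ≤ hq.qC * (ε / hq.qC + D * (K * q f)) := by gcongr
      _ = _ := by field_simp; ring

lemma inClosedSpan_of_uncondSum (hq : IsQuasiBanach q) {ι κ : Type*} {x : ι → M} {S : Set ι}
    (α : κ → S) (a : κ → ℝ) {f : M} (h : UncondSum q (fun m => a m • x (α m)) f) :
    InClosedSpan q (fun n : S => x n.1) f := by
  classical
  intro ε hε
  obtain ⟨F, hF⟩ := h ε hε
  have h1 := hF F subset_rfl
  rw [hq.sub_comm] at h1
  let b : S →₀ ℝ := Finsupp.onFinset (F.image α) (fun k => ∑ m ∈ F with α m = k, a m) (by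
    intro k hk
    by_contra hc
    apply hk
    refine Finset.sum_eq_zero fun m hm => ?_
    have := Finset.mem_filter.1 hm
    exact absurd (Finset.mem_image.2 ⟨m, this.1, this.2⟩) hc)
  refine ⟨b, ?_⟩
  have e : ∑ n ∈ b.support, b n • x n.1 = ∑ m ∈ F, a m • x (α m) := by
    rw [sum_fib F α a (fun n : S => x n.1), Finset.sum_subset (Finsupp.support_onFinset_subset)]
    · rfl
    · intro n _ hn
      rw [Finsupp.notMem_support_iff.1 hn, zero_smul]
  rw [e]
  exact h1

lemma UncondSum.single (hq : IsQuasiBanach q) {α : Type*} (v : α → M) (m : α)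
    (hv : ∀ k, k ≠ m → v k = 0) : UncondSum q v (v m) := by
  intro ε hε
  refine ⟨{m}, fun G hG => ?_⟩
  rw [Finset.sum_eq_single_of_mem m (hG (by simp)) (fun k _ hk => hv k hk), sub_self, hq.zero]
  exact hε

/-- transport along an equivalence of a basis with a subbasis -/
lemma exists_TR (hq : IsQuasiBanach q) {ι κ : Type*} {x : ι → M} {y : κ → M}
    (hx : IsUncondBasis q x) (hnx : Normalized q x) (hy : IsUncondBasis q y) (hny : Normalized q y)
    (α : κ → ι) (hα : Function.Injective α) (h : EqvOn q Set.univ y (fun m => x (α m))) :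
    ∃ (T R : M →ₗ[ℝ] M) (E : ℝ), 0 < E ∧ (∀ f, q (T f) ≤ E * q f) ∧ (∀ f, q (R f) ≤ E * q f) ∧
      (∀ f, R (T f) = f) ∧ ∀ f, InClosedSpan q (fun n : Set.range α => x n.1) (T f) := by
  classical
  obtain ⟨D, hD, h1, h2⟩ := h
  obtain ⟨Kx, hKx, hBx⟩ := Bd.bound hq hx hnx
  obtain ⟨Ky, hKy, hBy⟩ := Bd.bound hq hy hny
  obtain ⟨T, E₁, hE₁, hT, hTb⟩ := exists_op hq (bcoord hq hy) y (fun m => x (α m)) hKy hD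
    (fun f => (bcoord_sum hq hy f).ucauchy hq)
    (fun f F => by simpa using hBy f F (fun _ => 1) (by simp)) h1
  obtain ⟨R, E₂, hE₂, hR, hRb⟩ := exists_op hq (fun m => bcoord hq hx (α m)) (fun m => x (α m)) y
    hKx hD
    (by
      intro f ε hε
      obtain ⟨F, hF⟩ := (bcoord_sum hq hx f).ucauchy hq ε hε
      refine ⟨F.preimage α hα.injOn, fun G hG => ?_⟩
      have := hF (G.map ⟨α, hα⟩) (by
        rw [Finset.disjoint_left] at hG ⊢
        intro n hn hn'
        obtain ⟨m, hm, rfl⟩ := Finset.mem_map.1 hn'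
        exact hG (Finset.mem_preimage.2 hn) hm)
      rwa [Finset.sum_map] at this)
    (by
      intro f F
      have := hBx f (F.map ⟨α, hα⟩) (fun _ => 1) (by simp)
      rw [Finset.sum_map] at this
      simpa using this) h2
  have hRx : ∀ m, R (x (α m)) = y m := by
    intro m
    refine (hR (x (α m))).unique hq ?_
    have := UncondSum.single hq (fun k => bcoord hq hx (α k) (x (α m)) • y k) m (by
      intro k hk
      simp only [bcoord_ne hq hx (α k) (α m) (fun hc => hk (hα hc)), zero_smul])
    simpa only [bcoord_self, one_smul] using this
  refine ⟨T, R, max E₁ E₂, lt_max_of_lt_left hE₁, fun f => (hTb f).trans ?_,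
    fun f => (hRb f).trans ?_, fun f => ?_, fun f => ?_⟩
  · exact mul_le_mul_of_nonneg_right (le_max_left _ _) (hq.q_nonneg _)
  · exact mul_le_mul_of_nonneg_right (le_max_right _ _) (hq.q_nonneg _)
  · have := (hT f).map hq R hRb
    simp only [map_smul, hRx] at this
    exact this.unique hq (bcoord_sum hq hy f)
  · exact inClosedSpan_of_uncondSum hq (fun m => (⟨α m, m, rfl⟩ : Set.range α)) _ (hT f)

lemma KComplemented.basis (hq : IsQuasiBanach q) {ι : Type*} {x : ι → M} (hb : IsUncondBasis q x)
    (hn : Normalized q x) : ∃ K : ℝ, 0 < K ∧ KComplemented q x K := by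
  obtain ⟨R, hR, h⟩ := Bd.bound hq hb hn
  refine ⟨R, hR, bcoord hq hb, fun m => ⟨R, fun f => ?_⟩, bcoord_self hq hb, bcoord_ne hq hb, ?_⟩
  · have := h f {m} (fun _ => 1) (by simp)
    simpa [hq.q_smul, hn m] using this
  · intro a ha f hf F
    refine (h f F a ha).trans ?_
    exact mul_le_of_le_one_right hR.le hf

lemma IsUncondBasis.inClosedSpan_univ (hq : IsQuasiBanach q) {ι : Type*} {x : ι → M}
    (hb : IsUncondBasis q x) (f : M) :
    InClosedSpan q (fun n : (Set.univ : Set ι) => x n.1) f :=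
  inClosedSpan_of_uncondSum hq (fun n => ⟨n, trivial⟩) _ (bcoord_sum hq hb f)

/-- normalized image of a basis under an isomorphism onto a complemented subspace -/
lemma transported (hq : IsQuasiBanach q) {ι : Type*} {x : ι → M}
    (hx : IsUncondBasis q x) (hnx : Normalized q x) (T R : M →ₗ[ℝ] M) {E : ℝ} (hE : 0 < E)
    (hT : ∀ f, q (T f) ≤ E * q f) (hR : ∀ f, q (R f) ≤ E * q f) (hRT : ∀ f, R (T f) = f) :
    ∃ K : ℝ, 0 < K ∧ 
      IsUncondBasicSeq q (fun n => (q (T (x n)))⁻¹ • T (x n)) ∧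
      Normalized q (fun n => (q (T (x n)))⁻¹ • T (x n)) ∧
      KComplemented q (fun n => (q (T (x n)))⁻¹ • T (x n)) K ∧
      EqvOn q Set.univ x (fun n => (q (T (x n)))⁻¹ • T (x n)) := by
  have hp := hq.pos
  obtain ⟨K, hK, hB⟩ := Bd.bound hq hx hnx
  obtain ⟨U, hU, hUnc⟩ := Unc.basis hq hx hnx
  set t : ι → ℝ := fun n => q (T (x n)) with ht
  have htE : ∀ n, t n ≤ E := fun n => by simpa [hnx n] using hT (x n)
  have hEt : ∀ n, 1 ≤ E * t n := fun n => by
    have := hR (T (x n))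
    rwa [hRT, hnx n] at this
  have ht0 : ∀ n, 0 < t n := fun n => pos_of_mul_pos_right (lt_of_lt_of_le one_pos (hEt n)) hE.le
  have hz : ∀ n (c : ℝ), c • (t n)⁻¹ • T (x n) = T ((c * (t n)⁻¹) • x n) := by
    intro n c; rw [map_smul, smul_smul]
  have hz2 : ∀ n (c : ℝ), (c * t n) • (t n)⁻¹ • T (x n) = T (c • x n) := by
    intro n c; rw [hz, mul_assoc, mul_inv_cancel₀ (ht0 n).ne', mul_one]
  refine ⟨E * (K * E), by positivity, ?_, ?_, ?_, ?_⟩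
  · intro f hf
    have hTR : T (R f) = f := by
      rw [← sub_eq_zero]
      apply hq.eq_zero
      intro ε hε
      obtain ⟨a, ha⟩ := hf (ε / (hq.qC * (E * E + 1))) (by positivity)
      set w := ∑ n ∈ a.support, a n • (t n)⁻¹ • T (x n) with hw
      have hw' : T (R w) = w := by
        simp only [hw, hz, ← map_sum, hRT]
      have e : T (R f) - f = T (R (f - w)) - (f - w) := by
        rw [map_sub R, map_sub T, hw']; abel
      rw [e]
      have h0 := hq.q_nonneg (f - w)
      calc _ ≤ _ := hq.tri_sub _ _
        _ ≤ hq.qC * (E * (E * q (f - w)) + q (f - w)) := by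
          gcongr
          refine (hT _).trans ?_
          gcongr
          exact hR _
        _ = hq.qC * (E * E + 1) * q (f - w) := by ring
        _ ≤ hq.qC * (E * E + 1) * (ε / (hq.qC * (E * E + 1))) := by gcongr
        _ = ε := by field_simp
    refine ⟨fun n => bcoord hq hx n (R f) * t n, ?_, ?_⟩
    · have := (bcoord_sum hq hx (R f)).map hq T hT
      simp only [hTR, ← hz2] at this
      exact this
    · intro b hb
      have := UncondSum.map hq hb R hR
      change UncondSum q (fun n => R (b n • (t n)⁻¹ • T (x n))) (R f) at this
      simp only [hz, hRT] at this
      funext n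
      rw [← bcoord_unique hq hx this n, mul_assoc, inv_mul_cancel₀ (ht0 n).ne', mul_one]
  · intro n
    change q ((t n)⁻¹ • T (x n)) = 1
    rw [hq.q_smul, abs_of_pos (inv_pos.2 (ht0 n))]
    exact inv_mul_cancel₀ (ht0 n).ne'
  · refine ⟨fun n => t n • (bcoord hq hx n).comp R, fun n => ⟨|t n| * (K * E), fun f => ?_⟩,
      fun n => ?_, fun n m hnm => ?_, ?_⟩
    · have := hB (R f) {n} (fun _ => 1) (by simp)
      simp only [Finset.sum_singleton, one_mul, hq.q_smul, hnx n, mul_one] at this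
      simp only [LinearMap.smul_apply, LinearMap.comp_apply, smul_eq_mul, abs_mul]
      calc _ ≤ |t n| * (K * (E * q f)) := by
            gcongr
            refine this.trans ?_
            gcongr
            exact hR f
        _ = _ := by ring
    · simp only [LinearMap.smul_apply, LinearMap.comp_apply, smul_eq_mul, map_smul, hRT,
        bcoord_self, mul_one]
      first
        | exact mul_inv_cancel₀ (ht0 n).ne'
        | exact inv_mul_cancel₀ (ht0 n).ne'
    · simp only [LinearMap.smul_apply, LinearMap.comp_apply, smul_eq_mul, map_smul, hRT,
        bcoord_ne hq hx n m hnm, mul_zero]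
    · intro a ha f hf F
      have e : ∑ n ∈ F, (a n * (t n • (bcoord hq hx n).comp R) f) • (t n)⁻¹ • T (x n) =
          T (∑ n ∈ F, (a n * bcoord hq hx n (R f)) • x n) := by
        rw [map_sum]
        refine Finset.sum_congr rfl fun n _ => ?_
        rw [← hz2]
        congr 1
        simp only [LinearMap.smul_apply, LinearMap.comp_apply, smul_eq_mul]
        ring
      rw [e]
      refine (hT _).trans ?_
      gcongr
      refine (hB (R f) F a ha).trans ?_
      gcongr
      refine (hR f).trans ?_
      exact mul_le_of_le_one_right hE.le hf
  · have s1 : ∀ (F : Finset ι) (a : ι → ℝ), ∑ n ∈ F, a n • (t n)⁻¹ • T (x n) =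
        T (∑ n ∈ F, (a n * (t n)⁻¹) • x n) := by
      intro F a
      rw [map_sum]
      exact Finset.sum_congr rfl fun n _ => hz n (a n)
    have s2 : ∀ (F : Finset ι) (c : ℝ) (a : ι → ℝ), 0 < c → q (∑ n ∈ F, (c * a n) • x n) =
        c * q (∑ n ∈ F, a n • x n) := by
      intro F c a hc
      rw [← abs_of_pos hc, ← hq.q_smul, Finset.smul_sum, abs_of_pos hc]
      simp only [smul_smul]
    refine ⟨E * (U * E), by positivity, fun F _ a => ?_, fun F _ a => ?_⟩
    · rw [s1]
      refine (hT _).trans ?_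
      rw [mul_assoc E, mul_assoc U, ← s2 F E a hE]
      gcongr
      apply hUnc
      intro n _
      rw [abs_mul, abs_mul, mul_comm, abs_of_pos (inv_pos.2 (ht0 n)), abs_of_pos hE]
      gcongr
      rw [inv_le_iff_one_le_mul₀ (ht0 n)]
      exact hEt n
    · rw [s1]
      have i1 := hUnc F (fun n => E * (a n * (t n)⁻¹)) a (by
        intro n _
        rw [abs_mul, abs_mul, abs_of_pos (inv_pos.2 (ht0 n)), abs_of_pos hE]
        have : 1 ≤ E * (t n)⁻¹ := by
          rw [← div_eq_mul_inv, one_le_div (ht0 n)]; exact htE n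
        nlinarith [abs_nonneg (a n)])
      rw [s2 F E _ hE] at i1
      refine i1.trans ?_
      have i2 := hR (T (∑ n ∈ F, (a n * (t n)⁻¹) • x n))
      rw [hRT] at i2
      calc _ ≤ U * (E * (E * q (T (∑ n ∈ F, (a n * (t n)⁻¹) • x n)))) := by gcongr
        _ = _ := by ring

/-- iterated copies coming from equivalence with the square -/
def copies {ι : Type*} (τ₀ τ₁ : ι → ι) : ℕ → ι → ι
  | 0 => τ₀
  | i + 1 => fun n => τ₁ (copies τ₀ τ₁ i n)

lemma copies_inj {ι : Type*} {τ₀ τ₁ : ι → ι} (h0 : Function.Injective τ₀)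
    (h1 : Function.Injective τ₁) (h01 : ∀ n m, τ₀ n ≠ τ₁ m) :
    ∀ i j n m, copies τ₀ τ₁ i n = copies τ₀ τ₁ j m → i = j ∧ n = m := by
  intro i
  induction i with
  | zero =>
    intro j n m h
    cases j with
    | zero => exact ⟨rfl, h0 h⟩
    | succ j => exact absurd h (h01 _ _)
  | succ i ih =>
    intro j n m h
    cases j with
    | zero => exact absurd h.symm (h01 _ _)
    | succ j =>
      obtain ⟨e1, e2⟩ := ih j n m (h1 h)
      exact ⟨by rw [e1], e2⟩

lemma exists_copies (hq : IsQuasiBanach q) {ι : Type*} {x : ι → M}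
    (hsq : PermutativelyEquivalent q (qPow q 2) x (powerFamily x Set.univ 2)) :
    ∃ σ : ℕ → ι → ι, (∀ i j n m, σ i n = σ j m → i = j ∧ n = m) ∧
      ∀ i, EqvOn q Set.univ x (fun n => x (σ i n)) := by
  obtain ⟨π, C, hC, h⟩ := hsq
  let τ : Fin 2 → ι → ι := fun j n => π.symm (j, ⟨n, trivial⟩)
  have hτ : ∀ j, EqvOn q Set.univ x (fun n => x (τ j n)) := by
    intro j
    have := (levels hq hC π h j).comp (A := Set.univ) (τ j) (by intro n _; simp [τ])
    refine this.symm.congr ?_ ?_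
    · intro n _; simp [τ]
    · intro n _; rfl
  refine ⟨copies (τ 0) (τ 1), copies_inj ?_ ?_ ?_, ?_⟩
  · intro n m h
    exact congrArg (fun p : Fin 2 × (Set.univ : Set ι) => (p.2 : ι)) (π.symm.injective h)
  · intro n m h
    exact congrArg (fun p : Fin 2 × (Set.univ : Set ι) => (p.2 : ι)) (π.symm.injective h)
  · intro n m h
    simp [τ] at h
  · intro i
    induction i with
    | zero => exact hτ 0
    | succ i ih =>
      have := (hτ 1).comp (A := Set.univ) (copies (τ 0) (τ 1) i) (by simp)
      exact ih.trans this

/-- cancellation of powers via Hall's theorem -/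
lemma exists_hall {ι κ : Type*} {s : ℕ} (β : ι → Fin s × κ) (hβ : Function.Injective β)
    (σ : ℕ → ι → ι) (hσ : ∀ i j n m, σ i n = σ j m → i = j ∧ n = m) :
    ∃ ψ : ι → κ, Function.Injective ψ ∧ ∀ n, ∃ i : Fin s, (β (σ i n)).2 = ψ n := by
  classical
  have := (Finset.all_card_le_biUnion_card_iff_exists_injective
    (fun n : ι => (Finset.univ : Finset (Fin s)).image fun i : Fin s => (β (σ i n)).2)).1 (by
    intro A
    rcases Nat.eq_zero_or_pos s with rfl | hs
    · rcases A.eq_empty_or_nonempty with rfl | ⟨n, _⟩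
      · simp
      · exact (β n).1.elim0
    · set N := A.biUnion (fun n : ι => (Finset.univ : Finset (Fin s)).image
        fun i : Fin s => (β (σ i n)).2) with hN
      have : ((Finset.univ : Finset (Fin s)) ×ˢ A).card ≤
          ((Finset.univ : Finset (Fin s)) ×ˢ N).card := by
        apply Finset.card_le_card_of_injOn (fun p => β (σ p.1 p.2))
        · intro p hp
          have hp2 : p.2 ∈ A := by simpa using hp
          have : (β (σ p.1 p.2)).2 ∈ N := Finset.mem_biUnion.2 ⟨p.2, hp2,
            Finset.mem_image.2 ⟨p.1, by simp, rfl⟩⟩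
          simpa using this
        · intro p _ p' _ h
          obtain ⟨e1, e2⟩ := hσ _ _ _ _ (hβ h)
          exact Prod.ext (Fin.ext e1) e2
      rw [Finset.card_product, Finset.card_product, Finset.card_univ, Fintype.card_fin] at this
      exact Nat.le_of_mul_le_mul_left this hs)
  obtain ⟨ψ, h1, h2⟩ := this
  refine ⟨ψ, h1, fun n => ?_⟩
  obtain ⟨i, _, hi⟩ := Finset.mem_image.1 (h2 n)
  exact ⟨i, hi⟩

end QB


theorem unique_uncond_basis_of_powerUniversal
    {M : Type*} [AddCommGroup M] [Module ℝ M] (q : M → ℝ) (hq : IsQuasiBanach q)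
    {ι : Type} [Countable ι] (x : ι → M)
    (hbasis : IsUncondBasis q x) (hnorm : Normalized q x)
    (hPU : PowerUniversal q x)
    (hsq : PermutativelyEquivalent q (qPow q 2) x (powerFamily x Set.univ 2)) :
    ∀ (κ : Type) (_ : Countable κ) (y : κ → M),
      IsUncondBasis q y → Normalized q y → PermutativelyEquivalent q q y x := by
  intro κ hκ y hy hny
  obtain ⟨Ux, hUx, hUncx⟩ := Unc.basis hq hbasis hnorm
  obtain ⟨Uy, hUy, hUncy⟩ := Unc.basis hq hy hny
  obtain ⟨σ, hσ, hσx⟩ := exists_copies hq hsq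
  -- Step 1: `y` is equivalent to a subbasis of `x`
  obtain ⟨α, hα, hyx⟩ : ∃ α : κ → ι, Function.Injective α ∧
      EqvOn q Set.univ y (fun m => x (α m)) := by
    obtain ⟨K, hK, hKc⟩ := KComplemented.basis hq hy hny
    obtain ⟨s, C, hC, H⟩ := hPU K hK
    obtain ⟨A, π, hπ⟩ := H Set.univ κ hκ y (fun m => hbasis.inClosedSpan_univ hq (y m))
      (fun f _ => hy f) hny hKc
    have hα : Function.Injective (fun m => σ (π m).1.1 (π m).1.2) := by
      intro m m' h
      obtain ⟨e1, e2⟩ := hσ _ _ _ _ h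
      exact π.injective (Subtype.ext (Prod.ext (Fin.ext e1) (Subtype.ext e2)))
    refine ⟨fun m => σ (π m).1.1 (π m).1.2, hα, ?_⟩
    refine EqvOn.glue hq hUy hUncy hUx (hUncx.comp _ hα) (fun m => (π m).1.1) fun j => ?_
    have h1 := levels hq hC (fun m => (π m).1) hπ j
    have h2 := (hσx j).comp (A := {m | (π m).1.1 = j}) (fun m => ((π m).1.2 : ι)) (by simp)
    refine (h1.trans h2).congr (fun _ _ => rfl) ?_
    intro m hm
    have hm' : (π m).1.1 = j := hm
    simp only [hm']
  -- Step 2: `x` is equivalent to a subbasis of a power of `y`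
  obtain ⟨s, β, hβ, hxy⟩ : ∃ (s : ℕ) (β : ι → Fin s × κ), Function.Injective β ∧
      ∀ j, EqvOn q {n | (β n).1 = j} x (fun n => y (β n).2) := by
    obtain ⟨T, R, E, hE, hT, hR, hRT, hspan⟩ := exists_TR hq hbasis hnorm hy hny α hα hyx
    obtain ⟨K, hK, hz1, hz2, hz3, hz4⟩ := transported hq hbasis hnorm T R hE hT hR hRT
    obtain ⟨s, C, hC, H⟩ := hPU K hK
    obtain ⟨A, π, hπ⟩ := H (Set.range α) ι inferInstance _ (fun n => by
      have := hspan ((q (T (x n)))⁻¹ • x n)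
      rwa [map_smul] at this) hz1 hz2 hz3
    have hch : ∀ n : Set.range α, ∃ m, α m = n.1 := fun n => n.2
    choose γ hγ using hch
    refine ⟨s, fun n => ((π n).1.1, γ (π n).1.2), ?_, fun j => ?_⟩
    · intro n n' h
      have e1 : (π n).1.1 = (π n').1.1 := congrArg (fun p : Fin s × κ => p.1) h
      have e2 : γ (π n).1.2 = γ (π n').1.2 := congrArg (fun p : Fin s × κ => p.2) h
      have e3 : (π n).1.2 = (π n').1.2 := by
        apply Subtype.ext
        rw [← hγ, ← hγ, e2]
      exact π.injective (Subtype.ext (Prod.ext e1 e3))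
    · have h1 := levels hq hC (fun n => (π n).1) hπ j
      have h0 := hz4.comp (A := {n | (π n).1.1 = j}) id (by simp)
      have h2 := hyx.symm.comp (A := {n | (π n).1.1 = j}) (fun n => γ (π n).1.2) (by simp)
      simp only [hγ] at h2
      exact (h0.trans h1).trans h2
  -- Step 3: `x` is equivalent to a subbasis of `y`
  obtain ⟨ψ, hψ, hxy'⟩ : ∃ ψ : ι → κ, Function.Injective ψ ∧
      EqvOn q Set.univ x (fun n => y (ψ n)) := by
    obtain ⟨ψ, hψ, hi⟩ := exists_hall β hβ σ hσ
    choose i hi using hi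
    refine ⟨ψ, hψ, ?_⟩
    refine EqvOn.glue hq hUx hUncx hUy (hUncy.comp _ hψ)
      (fun n => (i n, (β (σ (i n) n)).1)) fun p => ?_
    have h1 := (hσx p.1).comp (A := {n | (i n, (β (σ (i n) n)).1) = p}) id (by simp)
    have h2 := (hxy p.2).comp (A := {n | (i n, (β (σ (i n) n)).1) = p}) (σ p.1) (by
      rintro n rfl
      rfl)
    refine (h1.trans h2).congr (fun _ _ => rfl) ?_
    rintro n rfl
    rw [← hi n]
  -- Step 4: Schroeder-Bernstein
  obtain ⟨h, hbij, hrel⟩ := Function.Embedding.schroeder_bernstein_of_rel hα hψ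
    (fun m n => α m = n ∨ ψ n = m) (fun _ => Or.inl rfl) (fun _ => Or.inr rfl)
  classical
  have hfin : EqvOn q Set.univ y (fun m => x (h m)) := by
    refine EqvOn.glue hq hUy hUncy hUx (hUncx.comp _ hbij.injective)
      (fun m => decide (α m = h m)) fun t => ?_
    cases t with
    | true =>
      refine (hyx.comp (A := {m | decide (α m = h m) = true}) id (by simp)).congr
        (fun _ _ => rfl) ?_
      intro m hm
      have : α m = h m := by simpa using hm
      simp [this]
    | false =>
      refine (hxy'.symm.comp (A := {m | decide (α m = h m) = false}) h (by simp)).congr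
        ?_ (fun _ _ => rfl)
      intro m hm
      have : ¬ α m = h m := by simpa using hm
      rw [(hrel m).resolve_left this]
  obtain ⟨D, hD, d1, d2⟩ := hfin
  refine ⟨Equiv.ofBijective h hbij, D, hD, fun a => ⟨?_, ?_⟩⟩
  · rw [inv_mul_le_iff₀ hD]
    exact d2 a.support (by simp) a
  · exact d1 a.support (by simp) a

end
end
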